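/- arXiv:2211.13645 — 2 statements merged into one kernel-verified Lean document; each statement's English description precedes it below -/
import Mathlib

section
/- For λ > −1, t ∈ ℝ and integer m ≥ 2, let 𝒜_n(t) = det[μ_{2(i+j)}(t;λ,m)]_{i,j=0}^{n−1} and ℬ_n(t) = det[μ_{2(i+j)+2}(t;λ,m)]_{i,j=0}^{n−1} (with 𝒜₀ = ℬ₀ = 1) be the Hankel determinants of even moments of the generalised higher order Freud weight. Then 𝒜_n(t) = Wr(μ₀, dμ₀/dt, …, d^{n−1}μ₀/dt^{n−1})(t), ℬ_n(t) = Wr(dμ₀/dt, d²μ₀/dt², …, d^nμ₀/dt^n)(t), and the recurrence coefficients satisfy β_{2n}(t;λ) = (d/dt) ln( ℬ_n(t)/𝒜_n(t) ) and β_{2n+1}(t;λ) = (d/dt) ln( 𝒜_{n+1}(t)/ℬ_n(t) ). -/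
open MeasureTheory Real Polynomial

/-- The generalised higher order Freud weight `ω(x;t,λ) = |x|^{2λ+1} exp(t x² − x^{2m})`. -/
noncomputable def freudWeight (m : ℕ) (lam t x : ℝ) : ℝ :=
  |x| ^ (2 * lam + 1) * Real.exp (t * x ^ 2 - x ^ (2 * m))

/-- The `k`-th moment `μ_k(t;λ,m)` of the generalised higher order Freud weight. -/
noncomputable def freudMoment (m : ℕ) (lam : ℝ) (k : ℕ) (t : ℝ) : ℝ :=
  ∫ x : ℝ, x ^ k * freudWeight m lam t x

/-- The Hankel determinant `𝒜_n(t) = det[μ_{2(i+j)}(t;λ,m)]_{i,j=0}^{n−1}`. -/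
noncomputable def hankelA (m : ℕ) (lam : ℝ) (n : ℕ) (t : ℝ) : ℝ :=
  Matrix.det (Matrix.of fun i j : Fin n => freudMoment m lam (2 * ((i : ℕ) + (j : ℕ))) t)

/-- The Hankel determinant `ℬ_n(t) = det[μ_{2(i+j)+2}(t;λ,m)]_{i,j=0}^{n−1}`. -/
noncomputable def hankelB (m : ℕ) (lam : ℝ) (n : ℕ) (t : ℝ) : ℝ :=
  Matrix.det (Matrix.of fun i j : Fin n => freudMoment m lam (2 * ((i : ℕ) + (j : ℕ)) + 2) t)


theorem aux_integrable_abs {a : ℝ} (ha : -1 < a) :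
    Integrable (fun x : ℝ => |x| ^ a * Real.exp (-x ^ 2)) := by
  have h0 : IntegrableOn (fun x : ℝ => |x| ^ a * Real.exp (-x ^ 2)) (Set.Ioi 0) := by
    have := integrableOn_rpow_mul_exp_neg_mul_sq (b := 1) one_pos ha
    refine this.congr_fun (fun x hx => ?_) measurableSet_Ioi
    simp [abs_of_pos (Set.mem_Ioi.1 hx)]
  rw [← integrableOn_univ, ← Set.Iio_union_Ici (a := (0 : ℝ)), integrableOn_union,
    integrableOn_Ici_iff_integrableOn_Ioi]
  refine ⟨?_, h0⟩
  rw [← (Measure.measurePreserving_neg (volume : Measure ℝ)).integrableOn_comp_preimage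
    (Homeomorph.neg ℝ).measurableEmbedding]
  simpa [Function.comp_def] using h0

theorem aux_exponent {m : ℕ} (hm : 2 ≤ m) {c s x : ℝ} (hs : |s| ≤ c) :
    s * x ^ 2 - x ^ (2 * m) ≤ (c + 1) ^ 2 + 1 - x ^ 2 := by
  have hc : 0 ≤ c := (abs_nonneg s).trans hs
  have h1 : s ≤ c := (le_abs_self s).trans hs
  rw [pow_mul]
  have hy : 0 ≤ x ^ 2 := sq_nonneg x
  generalize x ^ 2 = y at hy
  have h2 : s * y ≤ c * y := mul_le_mul_of_nonneg_right h1 hy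
  have h3 : y ^ 2 ≤ y ^ m + 1 := by
    rcases le_total 1 y with h | h
    · linarith [pow_le_pow_right₀ h hm]
    · have : 0 ≤ y ^ m := pow_nonneg hy m
      nlinarith
  nlinarith [sq_nonneg (y - (c + 1)), sq_nonneg y]

theorem aux_bound {m : ℕ} (hm : 2 ≤ m) (lam : ℝ) (k : ℕ) {c s x : ℝ} (hs : |s| ≤ c) (hx : x ≠ 0) :
    ‖x ^ k * freudWeight m lam s x‖ ≤
      Real.exp ((c + 1) ^ 2 + 1) * (|x| ^ ((k : ℝ) + (2 * lam + 1)) * Real.exp (-x ^ 2)) := by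
  have hx' : 0 < |x| := abs_pos.2 hx
  rw [freudWeight, Real.norm_eq_abs, abs_mul, abs_mul, abs_pow, Real.abs_exp,
    abs_of_nonneg (Real.rpow_nonneg hx'.le _), Real.rpow_add hx' (k : ℝ), Real.rpow_natCast]
  have h := Real.exp_le_exp.2 (aux_exponent (x := x) hm hs)
  rw [sub_eq_add_neg _ (x ^ 2), Real.exp_add] at h
  have h4 : 0 ≤ |x| ^ k * |x| ^ (2 * lam + 1) := by positivity
  calc _ = |x| ^ k * |x| ^ (2 * lam + 1) * Real.exp (s * x ^ 2 - x ^ (2 * m)) := by ring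
    _ ≤ _ := mul_le_mul_of_nonneg_left h h4
    _ = _ := by ring

theorem aux_bound_integrable {lam : ℝ} (hlam : -1 < lam) (k : ℕ) (c : ℝ) :
    Integrable (fun x : ℝ => Real.exp ((c + 1) ^ 2 + 1) *
      (|x| ^ ((k : ℝ) + (2 * lam + 1)) * Real.exp (-x ^ 2))) := by
  refine (aux_integrable_abs ?_).const_mul _
  have : (0 : ℝ) ≤ k := k.cast_nonneg
  linarith

theorem aux_meas (m : ℕ) (lam : ℝ) (k : ℕ) (t : ℝ) :
    AEStronglyMeasurable (fun x : ℝ => x ^ k * freudWeight m lam t x) := by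
  unfold freudWeight
  apply Measurable.aestronglyMeasurable
  fun_prop

theorem aux_ae_ne : ∀ᵐ x : ℝ, x ≠ 0 := by
  simp [ae_iff]

theorem aux_integrable {m : ℕ} (hm : 2 ≤ m) {lam : ℝ} (hlam : -1 < lam) (k : ℕ) (t : ℝ) :
    Integrable (fun x : ℝ => x ^ k * freudWeight m lam t x) := by
  refine (aux_bound_integrable hlam k |t|).mono' (aux_meas m lam k t) ?_
  filter_upwards [aux_ae_ne] with x hx
  exact aux_bound hm lam k le_rfl hx

theorem aux_hasDerivAt {m : ℕ} (hm : 2 ≤ m) {lam : ℝ} (hlam : -1 < lam) (k : ℕ) (t : ℝ) :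
    HasDerivAt (freudMoment m lam k) (freudMoment m lam (k + 2) t) t := by
  refine (hasDerivAt_integral_of_dominated_loc_of_deriv_le
    (F := fun s x => x ^ k * freudWeight m lam s x)
    (F' := fun s x => x ^ (k + 2) * freudWeight m lam s x)
    (Metric.ball_mem_nhds t one_pos)
    (Filter.Eventually.of_forall fun s => aux_meas m lam k s)
    (aux_integrable hm hlam k t) (aux_meas m lam (k + 2) t) ?_
    (aux_bound_integrable hlam (k + 2) (|t| + 1)) ?_).2
  · filter_upwards [aux_ae_ne] with x hx s hs
    refine aux_bound hm lam (k + 2) ?_ hx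
    rw [Metric.mem_ball, Real.dist_eq] at hs
    have := abs_sub_abs_le_abs_sub s t
    linarith
  · refine Filter.Eventually.of_forall fun x s _ => ?_
    unfold freudWeight
    have h : HasDerivAt (fun s : ℝ => s * x ^ 2 - x ^ (2 * m)) (1 * x ^ 2) s :=
      ((hasDerivAt_id s).mul_const _).sub_const _
    refine ((h.exp.const_mul (|x| ^ (2 * lam + 1))).const_mul (x ^ k)).congr_deriv ?_
    ring

theorem aux_pos {m : ℕ} (hm : 2 ≤ m) {lam : ℝ} (hlam : -1 < lam) (t : ℝ) :
    0 < freudMoment m lam 0 t := by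
  unfold freudMoment
  have hn : ∀ x, 0 ≤ x ^ 0 * freudWeight m lam t x := fun x => by
    unfold freudWeight; positivity
  rw [integral_pos_iff_support_of_nonneg hn (aux_integrable hm hlam 0 t)]
  refine lt_of_lt_of_le (b := volume (Set.Ioi (0 : ℝ))) (by simp) (measure_mono fun x hx => ?_)
  have hx : (0 : ℝ) < x := hx
  rw [Function.mem_support]
  unfold freudWeight
  have := abs_pos.2 hx.ne'
  positivity

theorem aux_iteratedDeriv {m : ℕ} (hm : 2 ≤ m) {lam : ℝ} (hlam : -1 < lam) (k : ℕ) :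
    iteratedDeriv k (freudMoment m lam 0) = freudMoment m lam (2 * k) := by
  induction k with
  | zero => simp
  | succ k ih =>
    rw [iteratedDeriv_succ, ih]
    funext t
    exact (aux_hasDerivAt hm hlam (2 * k) t).deriv

theorem aux_poly_integrable {m : ℕ} (hm : 2 ≤ m) {lam : ℝ} (hlam : -1 < lam) (t : ℝ)
    (p : Polynomial ℝ) : Integrable (fun x : ℝ => p.eval x * freudWeight m lam t x) := by
  induction p using Polynomial.induction_on' with
  | add p q hp hq =>
    simp only [eval_add, add_mul]
    exact hp.add hq
  | monomial n a =>
    simpa [mul_assoc] using (aux_integrable hm hlam n t).const_mul a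

/-- The moment functional. -/
noncomputable def momL {m : ℕ} (hm : 2 ≤ m) {lam : ℝ} (hlam : -1 < lam) (t : ℝ) :
    Polynomial ℝ →ₗ[ℝ] ℝ where
  toFun p := ∫ x : ℝ, p.eval x * freudWeight m lam t x
  map_add' p q := by
    simp only [eval_add, add_mul]
    exact integral_add (aux_poly_integrable hm hlam t p) (aux_poly_integrable hm hlam t q)
  map_smul' a p := by
    simp only [eval_smul, smul_eq_mul, mul_assoc, RingHom.id_apply]
    exact integral_const_mul _ _

theorem momL_X_pow {m : ℕ} (hm : 2 ≤ m) {lam : ℝ} (hlam : -1 < lam) (t : ℝ) (k : ℕ) :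
    momL hm hlam t (X ^ k) = freudMoment m lam k t := by
  simp [momL, freudMoment]

/-- Gram determinant. -/
theorem gram_det (M : Polynomial ℝ →ₗ[ℝ] ℝ) (Q : ℕ → Polynomial ℝ) (h : ℕ → ℝ)
    (hQm : ∀ k, (Q k).Monic) (hQd : ∀ k, (Q k).natDegree = k)
    (hd : ∀ k, M (Q k * Q k) = h k) (ho : ∀ j k, j ≠ k → M (Q j * Q k) = 0) (n : ℕ) :
    Matrix.det (Matrix.of fun i j : Fin n => M (X ^ ((i : ℕ) + (j : ℕ)))) =
      ∏ k ∈ Finset.range n, h k := by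
  set H : Matrix (Fin n) (Fin n) ℝ := Matrix.of fun i j : Fin n => M (X ^ ((i : ℕ) + (j : ℕ)))
    with hH
  set T : Matrix (Fin n) (Fin n) ℝ := Matrix.of fun k i : Fin n => (Q k).coeff i with hT
  have hTdet : T.det = 1 := by
    rw [Matrix.det_of_isLowerTriangular]
    · refine Finset.prod_eq_one fun i _ => ?_
      have := hQm i
      rw [Monic, leadingCoeff, hQd] at this
      simpa [hT] using this
    · intro i j hij
      have hij' : (i : ℕ) < j := by simpa using hij
      simp only [hT, Matrix.of_apply]
      exact coeff_eq_zero_of_natDegree_lt (by rw [hQd]; exact hij')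
  have hsum : ∀ k : Fin n, Q k = ∑ i : Fin n, C ((Q k).coeff i) * X ^ (i : ℕ) := by
    intro k
    rw [Fin.sum_univ_eq_sum_range (fun i => C ((Q k).coeff i) * X ^ i) n]
    exact as_sum_range_C_mul_X_pow' _ (by rw [hQd]; exact k.2)
  have hmul : T * H * T.transpose = Matrix.diagonal fun k : Fin n => h k := by
    ext k l
    have e : (T * H * T.transpose) k l = M (Q k * Q l) := by
      rw [hsum k, hsum l, Finset.sum_mul_sum]
      simp only [Matrix.mul_apply, map_sum, Finset.sum_mul, Matrix.transpose_apply]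
      rw [Finset.sum_comm]
      refine Finset.sum_congr rfl fun i _ => Finset.sum_congr rfl fun j _ => ?_
      rw [show C ((Q k).coeff i) * X ^ (i : ℕ) * (C ((Q l).coeff j) * X ^ (j : ℕ)) =
        ((Q k).coeff i * (Q l).coeff j) • (X ^ ((i : ℕ) + (j : ℕ)) : Polynomial ℝ) by
          rw [smul_eq_C_mul, C_mul, pow_add]; ring, map_smul]
      simp only [hT, hH, Matrix.of_apply, smul_eq_mul]
      ring
    rw [e]
    by_cases hkl : k = l
    · subst hkl; simp [hd]
    · rw [Matrix.diagonal_apply_ne _ hkl]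
      exact ho _ _ fun h' => hkl (Fin.ext h')
  have := congrArg Matrix.det hmul
  rw [Matrix.det_mul, Matrix.det_mul, Matrix.det_transpose, hTdet, Matrix.det_diagonal,
    Fin.prod_univ_eq_prod_range] at this
  simpa using this

section Algebra

/-- The recurrence, orthogonality data for a fixed `t`. -/
structure OPS (L : Polynomial ℝ →ₗ[ℝ] ℝ) (P : ℕ → Polynomial ℝ) (b : ℕ → ℝ) : Prop where
  b0 : b 0 = 0
  P0 : P 0 = 1
  bpos : ∀ n, 0 < b (n + 1)
  monic : ∀ n, (P n).Monic
  deg : ∀ n, (P n).natDegree = n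
  orth : ∀ j k, j ≠ k → L (P j * P k) = 0
  recX : ∀ n, X * P n = P (n + 1) + C (b n) * P (n - 1)
  pos : 0 < L 1

variable {L : Polynomial ℝ →ₗ[ℝ] ℝ} {P : ℕ → Polynomial ℝ} {b : ℕ → ℝ}

theorem L_C_mul (L : Polynomial ℝ →ₗ[ℝ] ℝ) (a : ℝ) (p : Polynomial ℝ) : L (C a * p) = a * L p := by
  rw [← smul_eq_C_mul, map_smul, smul_eq_mul]

theorem OPS.norm_succ (h : OPS L P b) (n : ℕ) :
    L (P (n + 1) * P (n + 1)) = b (n + 1) * L (P n * P n) := by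
  have h1 : X * P n * P (n + 1) = P (n + 1) * P (n + 1) + C (b n) * (P (n - 1) * P (n + 1)) := by
    rw [h.recX]; ring
  have h2 : X * P n * P (n + 1) = P (n + 2) * P n + C (b (n + 1)) * (P n * P n) := by
    have := h.recX (n + 1)
    simp only [Nat.add_sub_cancel] at this
    calc _ = (X * P (n + 1)) * P n := by ring
      _ = _ := by rw [this]; ring
  have h3 := congrArg L (h1.symm.trans h2)
  rw [map_add, map_add, L_C_mul, L_C_mul, h.orth (n - 1) (n + 1) (by omega),
    h.orth (n + 2) n (by omega)] at h3
  linarith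

theorem OPS.norm_pos (h : OPS L P b) (n : ℕ) : 0 < L (P n * P n) := by
  induction n with
  | zero => simpa [h.P0] using h.pos
  | succ n ih => rw [h.norm_succ]; exact mul_pos (h.bpos n) ih

theorem OPS.norm_X2 (h : OPS L P b) (n : ℕ) :
    L (X ^ 2 * (P n * P n)) = (b (n + 1) + b n) * L (P n * P n) := by
  have h1 : X ^ 2 * (P n * P n) = P (n + 1) * P (n + 1) + C (2 * b n) * (P (n + 1) * P (n - 1))
      + C (b n * b n) * (P (n - 1) * P (n - 1)) := by
    calc X ^ 2 * (P n * P n) = (X * P n) * (X * P n) := by ring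
      _ = _ := by rw [h.recX, C_mul, C_mul, C_ofNat]; ring
  rw [h1, map_add, map_add, L_C_mul, L_C_mul, h.orth (n + 1) (n - 1) (by omega), h.norm_succ]
  cases n with
  | zero => simp [h.b0]
  | succ k =>
    have := h.norm_succ k
    simp only [Nat.add_sub_cancel]
    rw [this]; ring

theorem OPS.low (h : OPS L P b) (i : ℕ) : ∀ n, i < n → L (X ^ i * P n) = 0 := by
  induction i with
  | zero =>
    intro n hn
    have := h.orth 0 n (by omega)
    simpa [h.P0] using this
  | succ i ih =>
    intro n hn
    rw [pow_succ, mul_assoc, h.recX, mul_add,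
      show X ^ i * (C (b n) * P (n - 1)) = C (b n) * (X ^ i * P (n - 1)) by ring,
      map_add, L_C_mul, ih _ (by omega), ih _ (by omega)]
    simp

theorem OPS.parity (h : OPS L P b) (k : ℕ) :
    (∃ Q : Polynomial ℝ, P (2 * k) = expand ℝ 2 Q) ∧
      ∃ R : Polynomial ℝ, P (2 * k + 1) = X * expand ℝ 2 R := by
  have hr : ∀ n, P (n + 2) = X * P (n + 1) - C (b (n + 1)) * P n := fun n => by
    rw [h.recX]; simp
  induction k with
  | zero =>
    refine ⟨⟨1, by simp [h.P0]⟩, ⟨1, ?_⟩⟩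
    have := h.recX 0
    simp only [h.b0, h.P0, C_0, zero_mul, add_zero] at this
    simpa using this.symm
  | succ k ih =>
    obtain ⟨⟨Q, hQ⟩, R, hR⟩ := ih
    have h1 : P (2 * (k + 1)) = expand ℝ 2 (X * R - C (b (2 * k + 1)) * Q) := by
      rw [show 2 * (k + 1) = 2 * k + 2 by ring, hr, hR, hQ]
      simp only [map_sub, map_mul, expand_X, expand_C]
      ring
    refine ⟨⟨_, h1⟩, ⟨(X * R - C (b (2 * k + 1)) * Q) - C (b (2 * k + 2)) * R, ?_⟩⟩
    rw [show 2 * (k + 1) + 1 = (2 * k + 1) + 2 by ring, hr, show 2 * k + 1 + 1 = 2 * (k + 1) by ring,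
      h1, hR]
    simp only [map_sub, map_mul, expand_X, expand_C]
    ring

theorem OPS.detA (h : OPS L P b) (n : ℕ) :
    Matrix.det (Matrix.of fun i j : Fin n => L (X ^ (2 * ((i : ℕ) + (j : ℕ))))) =
      ∏ k ∈ Finset.range n, L (P (2 * k) * P (2 * k)) := by
  choose Q hQ using fun k => (h.parity k).1
  have := gram_det (L ∘ₗ (expand ℝ 2).toLinearMap) Q (fun k => L (P (2 * k) * P (2 * k)))
    (fun k => by
      have := h.monic (2 * k)
      rwa [hQ, monic_expand_iff two_pos] at this)
    (fun k => by
      have := h.deg (2 * k)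
      rw [hQ, natDegree_expand] at this
      omega)
    (fun k => by simp [hQ])
    (fun j k hjk => by
      have := h.orth (2 * j) (2 * k) (by omega)
      simpa [hQ] using this) n
  rw [← this]
  congr 2
  ext i j
  simp [pow_mul]

theorem OPS.detB (h : OPS L P b) (n : ℕ) :
    Matrix.det (Matrix.of fun i j : Fin n => L (X ^ (2 * ((i : ℕ) + (j : ℕ)) + 2))) =
      ∏ k ∈ Finset.range n, L (P (2 * k + 1) * P (2 * k + 1)) := by
  choose Q hQ using fun k => (h.parity k).2
  have hm : ∀ k, (expand ℝ 2 (Q k)).Monic := fun k => by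
    have := h.monic (2 * k + 1)
    rw [hQ] at this
    exact monic_X.of_mul_monic_left this
  have := gram_det (L ∘ₗ (LinearMap.mulLeft ℝ (X ^ 2)) ∘ₗ (expand ℝ 2).toLinearMap) Q
    (fun k => L (P (2 * k + 1) * P (2 * k + 1)))
    (fun k => by
      have := hm k
      rwa [monic_expand_iff two_pos] at this)
    (fun k => by
      have := h.deg (2 * k + 1)
      rw [hQ, monic_X.natDegree_mul (hm k), natDegree_expand, natDegree_X] at this
      omega)
    (fun k => by
      rw [hQ]
      simp only [LinearMap.comp_apply, AlgHom.toLinearMap_apply, LinearMap.mulLeft_apply, map_mul]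
      congr 1; ring)
    (fun j k hjk => by
      have := h.orth (2 * j + 1) (2 * k + 1) (by omega)
      rw [hQ, hQ] at this
      rw [← this]
      simp only [LinearMap.comp_apply, AlgHom.toLinearMap_apply, LinearMap.mulLeft_apply, map_mul]
      congr 1; ring) n
  rw [← this]
  congr 2
  ext i j
  simp only [LinearMap.comp_apply, AlgHom.toLinearMap_apply, LinearMap.mulLeft_apply, map_pow,
    expand_X]
  congr 1
  ring

end Algebra

section Flow

variable {L : ℝ → Polynomial ℝ →ₗ[ℝ] ℝ} {P : ℝ → ℕ → Polynomial ℝ} {b : ℝ → ℕ → ℝ}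

theorem norm_expand (h : ∀ t, OPS (L t) (P t) (b t)) (n : ℕ) (t : ℝ) :
    L t (P t n * P t n) = ∑ i ∈ Finset.range (n + 1), ∑ j ∈ Finset.range (n + 1),
      (P t n).coeff i * (P t n).coeff j * L t (X ^ (i + j)) := by
  have hs : P t n = ∑ i ∈ Finset.range (n + 1), C ((P t n).coeff i) * X ^ i :=
    as_sum_range_C_mul_X_pow' _ (by rw [(h t).deg]; omega)
  conv_lhs => rw [hs, Finset.sum_mul_sum]
  simp only [map_sum]
  refine Finset.sum_congr rfl fun i _ => Finset.sum_congr rfl fun j _ => ?_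
  rw [← L_C_mul, C_mul, pow_add]
  congr 1; ring

theorem coeff_diff (h : ∀ t, OPS (L t) (P t) (b t))
    (hL : ∀ k t, HasDerivAt (fun s => L s (X ^ k)) (L t (X ^ (k + 2))) t) (n : ℕ) :
    (∀ i, Differentiable ℝ fun t => (P t n).coeff i) ∧
      ∀ i, Differentiable ℝ fun t => (P t (n + 1)).coeff i := by
  have hn : ∀ n, (∀ i, Differentiable ℝ fun t => (P t n).coeff i) →
      Differentiable ℝ fun t => L t (P t n * P t n) := by
    intro n hd
    simp only [norm_expand h]
    have hL' : ∀ k, Differentiable ℝ fun s => L s (X ^ k) := fun k t =>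
      (hL k t).differentiableAt
    refine Differentiable.fun_sum fun i _ => Differentiable.fun_sum fun j _ => ?_
    exact ((hd i).mul (hd j)).mul (hL' _)
  induction n with
  | zero =>
    refine ⟨fun i => ?_, fun i => ?_⟩
    · simp only [(h _).P0]; exact differentiable_const _
    · have : ∀ t, P t 1 = X := fun t => by
        have := (h t).recX 0
        simpa [(h t).b0, (h t).P0] using this.symm
      simp only [zero_add, this]; exact differentiable_const _
  | succ n ih =>
    refine ⟨ih.2, fun i => ?_⟩
    have hb : Differentiable ℝ fun t => b t (n + 1) := by
      have : (fun t => b t (n + 1)) =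
          fun t => L t (P t (n + 1) * P t (n + 1)) / L t (P t n * P t n) := by
        funext t
        rw [(h t).norm_succ, mul_div_cancel_right₀ _ ((h t).norm_pos n).ne']
      rw [this]
      exact (hn _ ih.2).div (hn _ ih.1) fun t => ((h t).norm_pos n).ne'
    have hr : ∀ t, P t (n + 1 + 1) = X * P t (n + 1) - C (b t (n + 1)) * P t n := fun t => by
      rw [(h t).recX]; simp
    simp only [hr, coeff_sub, coeff_C_mul]
    cases i with
    | zero =>
      simp only [mul_coeff_zero, coeff_X_zero, zero_mul]
      exact (differentiable_const _).sub (hb.mul (ih.1 0))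
    | succ i =>
      simp only [coeff_X_mul]
      exact (ih.2 i).sub (hb.mul (ih.1 (i + 1)))

theorem norm_deriv (h : ∀ t, OPS (L t) (P t) (b t))
    (hL : ∀ k t, HasDerivAt (fun s => L s (X ^ k)) (L t (X ^ (k + 2))) t) (n : ℕ) (t : ℝ) :
    HasDerivAt (fun s => L s (P s n * P s n))
      ((b t (n + 1) + b t n) * L t (P t n * P t n)) t := by
  have hc := (coeff_diff h hL n).1
  set d : ℕ → ℝ := fun i => deriv (fun s => (P s n).coeff i) t with hd
  have hcd : ∀ i, HasDerivAt (fun s => (P s n).coeff i) (d i) t := fun i =>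
    (hc i t).hasDerivAt
  have hdn : d n = 0 := by
    have : (fun s => (P s n).coeff n) = fun _ => 1 := by
      funext s
      have := (h s).monic n
      rwa [Monic, leadingCoeff, (h s).deg] at this
    simp only [hd, this, deriv_const]
  have hs : P t n = ∑ i ∈ Finset.range (n + 1), C ((P t n).coeff i) * X ^ i :=
    as_sum_range_C_mul_X_pow' _ (by rw [(h t).deg]; omega)
  have hrow : ∀ i ∈ Finset.range (n + 1),
      d i * ∑ j ∈ Finset.range (n + 1), (P t n).coeff j * L t (X ^ (i + j)) = 0 := by
    intro i hi
    rcases eq_or_ne i n with rfl | hin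
    · rw [hdn, zero_mul]
    · have hi' : i < n := by have := Finset.mem_range.1 hi; omega
      have := (h t).low i n hi'
      rw [hs, Finset.mul_sum, map_sum] at this
      rw [show ∑ j ∈ Finset.range (n + 1), (P t n).coeff j * L t (X ^ (i + j)) = 0 from ?_, mul_zero]
      rw [← this]
      refine Finset.sum_congr rfl fun j _ => ?_
      rw [← L_C_mul, pow_add]
      congr 1; ring
  simp only [norm_expand h]
  have H := HasDerivAt.fun_sum (u := Finset.range (n + 1)) fun i _ =>
    HasDerivAt.fun_sum (u := Finset.range (n + 1)) fun j _ =>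
      ((hcd i).fun_mul (hcd j)).fun_mul (hL (i + j) t)
  refine H.congr_deriv ?_
  rw [← norm_expand h, ← (h t).norm_X2]
  simp only [add_mul, Finset.sum_add_distrib]
  have e1 : ∑ i ∈ Finset.range (n + 1), ∑ j ∈ Finset.range (n + 1),
      d i * (P t n).coeff j * L t (X ^ (i + j)) = 0 := by
    refine Finset.sum_eq_zero fun i hi => ?_
    rw [← hrow i hi, Finset.mul_sum]
    exact Finset.sum_congr rfl fun j _ => by ring
  have e2 : ∑ i ∈ Finset.range (n + 1), ∑ j ∈ Finset.range (n + 1),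
      (P t n).coeff i * d j * L t (X ^ (i + j)) = 0 := by
    rw [Finset.sum_comm, ← e1]
    refine Finset.sum_congr rfl fun i _ => Finset.sum_congr rfl fun j _ => ?_
    rw [add_comm j i]; ring
  rw [e1, e2, zero_add, zero_add]
  conv_rhs => rw [hs, Finset.sum_mul_sum, Finset.mul_sum]
  simp only [map_sum, Finset.mul_sum]
  refine Finset.sum_congr rfl fun i _ => Finset.sum_congr rfl fun j _ => ?_
  rw [← L_C_mul, C_mul, pow_add, pow_add]
  congr 1; ring

theorem log_deriv_even (h : ∀ t, OPS (L t) (P t) (b t))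
    (hL : ∀ k t, HasDerivAt (fun s => L s (X ^ k)) (L t (X ^ (k + 2))) t) (n : ℕ) (t : ℝ) :
    HasDerivAt (fun s => ∑ k ∈ Finset.range n, (Real.log (L s (P s (2 * k + 1) * P s (2 * k + 1)))
      - Real.log (L s (P s (2 * k) * P s (2 * k))))) (b t (2 * n)) t := by
  have hl : ∀ k, HasDerivAt (fun s => Real.log (L s (P s k * P s k))) (b t (k + 1) + b t k) t := by
    intro k
    refine ((norm_deriv h hL k t).log ((h t).norm_pos k).ne').congr_deriv ?_
    exact mul_div_cancel_right₀ _ ((h t).norm_pos k).ne'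
  refine (HasDerivAt.fun_sum fun k _ => (hl (2 * k + 1)).fun_sub (hl (2 * k))).congr_deriv ?_
  induction n with
  | zero => simp [(h t).b0]
  | succ n ih => rw [Finset.sum_range_succ, ih]; ring_nf

theorem log_deriv_odd (h : ∀ t, OPS (L t) (P t) (b t))
    (hL : ∀ k t, HasDerivAt (fun s => L s (X ^ k)) (L t (X ^ (k + 2))) t) (n : ℕ) (t : ℝ) :
    HasDerivAt (fun s => Real.log (L s (P s (2 * n) * P s (2 * n))) -
      ∑ k ∈ Finset.range n, (Real.log (L s (P s (2 * k + 1) * P s (2 * k + 1)))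
      - Real.log (L s (P s (2 * k) * P s (2 * k))))) (b t (2 * n + 1)) t := by
  have hl : ∀ k, HasDerivAt (fun s => Real.log (L s (P s k * P s k))) (b t (k + 1) + b t k) t := by
    intro k
    refine ((norm_deriv h hL k t).log ((h t).norm_pos k).ne').congr_deriv ?_
    exact mul_div_cancel_right₀ _ ((h t).norm_pos k).ne'
  refine ((hl (2 * n)).fun_sub (log_deriv_even h hL n t)).congr_deriv ?_
  ring

end Flow

/-- For `λ > −1`, `t ∈ ℝ` and integer `m ≥ 2`, the Hankel determinants
`𝒜_n, ℬ_n` of even moments of the generalised higher order Freud weight are the Wronskians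
`𝒜_n = Wr(μ₀, μ₀′, …, μ₀^{(n−1)})`, `ℬ_n = Wr(μ₀′, μ₀″, …, μ₀^{(n)})`, and the recurrence
coefficients satisfy `β_{2n} = (d/dt) ln(ℬ_n/𝒜_n)` and `β_{2n+1} = (d/dt) ln(𝒜_{n+1}/ℬ_n)`. -/
theorem recurrence_coefficients_wronskian (m : ℕ) (hm : 2 ≤ m) (lam : ℝ) (hlam : -1 < lam)
    (P : ℝ → ℕ → Polynomial ℝ) (β : ℝ → ℕ → ℝ)
    (hmonic : ∀ t n, (P t n).Monic) (hdeg : ∀ t n, (P t n).natDegree = n)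
    (horth : ∀ t, ∀ j k, j ≠ k →
      ∫ x : ℝ, (P t j).eval x * (P t k).eval x * freudWeight m lam t x = 0)
    (hβpos : ∀ t n, 1 ≤ n → 0 < β t n)
    (hP0 : ∀ t, P t 0 = 1) (hP1 : ∀ t, P t 1 = X)
    (hrec : ∀ t n, 1 ≤ n → P t (n + 1) = X * P t n - C (β t n) * P t (n - 1)) :
    ∀ (n : ℕ) (t : ℝ),
      hankelA m lam n t =
        Matrix.det (Matrix.of fun i j : Fin n =>
          iteratedDeriv ((i : ℕ) + (j : ℕ)) (freudMoment m lam 0) t) ∧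
      hankelB m lam n t =
        Matrix.det (Matrix.of fun i j : Fin n =>
          iteratedDeriv ((i : ℕ) + (j : ℕ) + 1) (freudMoment m lam 0) t) ∧
      (1 ≤ n →
        β t (2 * n) = deriv (fun s => Real.log (hankelB m lam n s / hankelA m lam n s)) t) ∧
      β t (2 * n + 1) =
        deriv (fun s => Real.log (hankelA m lam (n + 1) s / hankelB m lam n s)) t := by
  classical
  set L := momL hm hlam with hLdef
  set b : ℝ → ℕ → ℝ := fun t n => if n = 0 then 0 else β t n with hb
  have hops : ∀ t, OPS (L t) (P t) (b t) := fun t =>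
    { b0 := by simp [hb]
      P0 := hP0 t
      bpos := fun n => by simpa [hb] using hβpos t (n + 1) (by omega)
      monic := hmonic t
      deg := hdeg t
      orth := fun j k hjk => by
        have := horth t j k hjk
        simpa [hLdef, momL] using this
      recX := fun n => by
        cases n with
        | zero => simp [hb, hP0, hP1]
        | succ n => rw [hrec t (n + 1) (by omega)]; simp [hb]
      pos := by
        have := momL_X_pow hm hlam t 0
        rw [pow_zero] at this
        rw [this]
        exact aux_pos hm hlam t }
  have hL : ∀ k t, HasDerivAt (fun s => L s (X ^ k)) (L t (X ^ (k + 2))) t := by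
    intro k t
    simp only [hLdef, momL_X_pow]
    exact aux_hasDerivAt hm hlam k t
  have hA : ∀ n s, hankelA m lam n s =
      ∏ k ∈ Finset.range n, L s (P s (2 * k) * P s (2 * k)) := by
    intro n s
    rw [← (hops s).detA n]
    simp only [hLdef, momL_X_pow, hankelA]
  have hB : ∀ n s, hankelB m lam n s =
      ∏ k ∈ Finset.range n, L s (P s (2 * k + 1) * P s (2 * k + 1)) := by
    intro n s
    rw [← (hops s).detB n]
    simp only [hLdef, momL_X_pow, hankelB]
  have hA0 : ∀ n s, hankelA m lam n s ≠ 0 := fun n s => by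
    rw [hA]; exact Finset.prod_ne_zero_iff.2 fun k _ => ((hops s).norm_pos _).ne'
  have hB0 : ∀ n s, hankelB m lam n s ≠ 0 := fun n s => by
    rw [hB]; exact Finset.prod_ne_zero_iff.2 fun k _ => ((hops s).norm_pos _).ne'
  have hlA : ∀ n s, Real.log (hankelA m lam n s) =
      ∑ k ∈ Finset.range n, Real.log (L s (P s (2 * k) * P s (2 * k))) := fun n s => by
    rw [hA, Real.log_prod fun k _ => ((hops s).norm_pos _).ne']
  have hlB : ∀ n s, Real.log (hankelB m lam n s) =
      ∑ k ∈ Finset.range n, Real.log (L s (P s (2 * k + 1) * P s (2 * k + 1))) := fun n s => by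
    rw [hB, Real.log_prod fun k _ => ((hops s).norm_pos _).ne']
  intro n t
  refine ⟨?_, ?_, fun hn => ?_, ?_⟩
  · simp only [hankelA, aux_iteratedDeriv hm hlam]
  · simp only [hankelB, aux_iteratedDeriv hm hlam, mul_add, mul_one]
  · have e : (fun s => Real.log (hankelB m lam n s / hankelA m lam n s)) = fun s =>
        ∑ k ∈ Finset.range n, (Real.log (L s (P s (2 * k + 1) * P s (2 * k + 1)))
          - Real.log (L s (P s (2 * k) * P s (2 * k)))) := by
      funext s
      rw [Real.log_div (hB0 n s) (hA0 n s), hlA, hlB, Finset.sum_sub_distrib]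
    rw [e, (log_deriv_even hops hL n t).deriv]
    simp only [hb]
    rw [if_neg (by omega)]
  · have e : (fun s => Real.log (hankelA m lam (n + 1) s / hankelB m lam n s)) = fun s =>
        Real.log (L s (P s (2 * n) * P s (2 * n))) -
        ∑ k ∈ Finset.range n, (Real.log (L s (P s (2 * k + 1) * P s (2 * k + 1)))
          - Real.log (L s (P s (2 * k) * P s (2 * k)))) := by
      funext s
      rw [Real.log_div (hA0 (n + 1) s) (hB0 n s), hlA, hlB, Finset.sum_sub_distrib,
        Finset.sum_range_succ]
      ring
    rw [e, (log_deriv_odd hops hL n t).deriv]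
    simp only [hb]
    rw [if_neg (by omega)]
end

section
/- For λ > −1, t ∈ ℝ and integer m ≥ 2, the recurrence coefficients β_n(t;λ) of the monic polynomials orthogonal with respect to the generalised higher order Freud weight satisfy lim_{n→∞} β_n(t;λ) / n^{1/m} = (1/4) ( (m−1)! / (1/2)_m )^{1/m}, where (1/2)_m = (1/2)(3/2)⋯(m − 1/2) is the Pochhammer symbol. -/
open MeasureTheory Real Polynomial Filter

/-- step sign -/
def sg (a : Bool) : ℤ := if a then 1 else -1

/-- walk coefficients -/
noncomputable def wc (b : ℤ → ℝ) : ℕ → ℤ → ℤ → ℝ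
  | 0, n, l => if n = l then 1 else 0
  | j + 1, n, l => wc b j (n + 1) l + b n * wc b j (n - 1) l

def wE : ℤ → List Bool → ℤ
  | k, [] => k
  | k, a :: l => wE (k + sg a) l

noncomputable def wD (f : ℤ → ℝ) : ℤ → List Bool → ℝ
  | _, [] => 0
  | k, a :: l => (if a then 0 else f k) + wD f (k + sg a) l

noncomputable def wW (b : ℤ → ℝ) : ℤ → List Bool → ℝ
  | _, [] => 1
  | k, a :: l => (if a then 1 else b k) * wW b (k + sg a) l

def wl : ℕ → Finset (List Bool)
  | 0 => {[]}
  | n + 1 => (wl n).image (List.cons true) ∪ (wl n).image (List.cons false)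

lemma mem_wl (n : ℕ) (l : List Bool) : l ∈ wl n ↔ l.length = n := by
  induction n generalizing l with
  | zero => simp [wl]
  | succ n ih =>
    cases l with
    | nil => simp [wl]
    | cons a l => cases a <;> simp [wl, ih]

lemma sum_wl_succ (n : ℕ) (f : List Bool → ℝ) :
    ∑ l ∈ wl (n + 1), f l = ∑ l ∈ wl n, f (true :: l) + ∑ l ∈ wl n, f (false :: l) := by
  rw [wl, Finset.sum_union, Finset.sum_image, Finset.sum_image]
  · intro x _ y _ h; simpa using h
  · intro x _ y _ h; simpa using h
  · rw [Finset.disjoint_left]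
    intro x hx hy
    simp only [Finset.mem_image] at hx hy
    obtain ⟨u, _, rfl⟩ := hx
    obtain ⟨v, _, h⟩ := hy
    simp at h

lemma card_wl (n : ℕ) : ((wl n).card : ℝ) = 2 ^ n := by
  have h : ∀ n, ∑ l ∈ wl n, (1 : ℝ) = 2 ^ n := by
    intro n
    induction n with
    | zero => simp [wl]
    | succ n ih => rw [sum_wl_succ, ih]; ring
  simpa using h n

lemma wc_eq_sum (b : ℤ → ℝ) (j : ℕ) (n l : ℤ) :
    wc b j n l = ∑ p ∈ wl j, if wE n p = l then wW b n p else 0 := by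
  induction j generalizing n with
  | zero => simp only [wc, wl, Finset.sum_singleton, wE, wW]; congr
  | succ j ih =>
    rw [sum_wl_succ, wc, ih, ih, Finset.mul_sum]
    congr 1
    · refine Finset.sum_congr rfl fun p _ => ?_
      simp [wE, wW, sg]
    · refine Finset.sum_congr rfl fun p _ => ?_
      simp [wE, wW, sg, ← sub_eq_add_neg]

lemma wc_nonneg (b : ℤ → ℝ) (hb : ∀ k, 0 ≤ b k) (j : ℕ) (n l : ℤ) : 0 ≤ wc b j n l := by
  induction j generalizing n with
  | zero => simp only [wc]; split_ifs <;> norm_num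
  | succ j ih => exact add_nonneg (ih _) (mul_nonneg (hb _) (ih _))

lemma wc_le (b : ℤ → ℝ) (hb : ∀ k, 0 ≤ b k) (C : ℝ) (hC : ∀ k, b k ≤ C) (j : ℕ) (n l : ℤ) :
    wc b j n l ≤ (1 + C) ^ j := by
  have hC0 : 0 ≤ C := (hb 0).trans (hC 0)
  induction j generalizing n with
  | zero => simp only [wc]; split_ifs <;> norm_num
  | succ j ih =>
    rw [wc, pow_succ]
    have := mul_le_mul (hC n) (ih (n - 1)) (wc_nonneg b hb _ _ _) hC0
    nlinarith [ih (n + 1)]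

lemma wc_shift (b : ℤ → ℝ) (N : ℤ) (j : ℕ) (n l : ℤ) :
    wc (fun k => b (N + k)) j n l = wc b j (N + n) (N + l) := by
  induction j generalizing n with
  | zero => simp [wc]
  | succ j ih => rw [wc, wc, ih, ih]; simp only [add_assoc, add_sub_assoc]

lemma wc_scale (b : ℤ → ℝ) (s : ℝ) (hs : s ≠ 0) (j : ℕ) (n l : ℤ) :
    wc (fun k => s ^ 2 * b k) j n l = s ^ ((j : ℤ) + n - l) * wc b j n l := by
  induction j generalizing n with
  | zero =>
    simp only [wc]
    split_ifs with h
    · subst h; simp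
    · simp
  | succ j ih =>
    rw [wc, wc, ih, ih]
    have e1 : ((j : ℤ) + (n + 1) - l) = (((j + 1 : ℕ) : ℤ) + n - l) := by push_cast; ring
    have e2 : (((j + 1 : ℕ) : ℤ) + n - l) = ((j : ℤ) + (n - 1) - l) + 2 := by push_cast; ring
    rw [e1, e2, zpow_add₀ hs]
    norm_cast
    ring

/-- the Freud form -/
noncomputable def gF (m : ℕ) (b : ℤ → ℝ) (k : ℤ) : ℝ := b k * wc b (2 * m - 1) (k - 1) k

lemma gF_shift (m : ℕ) (b : ℤ → ℝ) (N k : ℤ) :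
    gF m (fun k => b (N + k)) k = gF m b (N + k) := by
  unfold gF
  rw [wc_shift]; simp only [add_sub_assoc]

lemma gF_scale (m : ℕ) (hm : 1 ≤ m) (b : ℤ → ℝ) (s : ℝ) (hs : 0 < s) (k : ℤ) :
    gF m (fun k => s * b k) k = s ^ m * gF m b k := by
  unfold gF
  have h := wc_scale b (√s) (by positivity) (2 * m - 1) (k - 1) k
  rw [Real.sq_sqrt hs.le] at h
  rw [h]
  have e : (((2 * m - 1 : ℕ) : ℤ) + (k - 1) - k) = ((2 * (m - 1) : ℕ) : ℤ) := by omega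
  rw [e, zpow_natCast, pow_mul, Real.sq_sqrt hs.le]
  obtain ⟨q, rfl⟩ : ∃ q, m = q + 1 := ⟨m - 1, by omega⟩
  simp only [Nat.add_sub_cancel, pow_succ]
  ring

lemma wc_tendsto {ι : Type*} (U : Filter ι) (B : ι → ℤ → ℝ) (b : ℤ → ℝ)
    (h : ∀ k, Tendsto (fun i => B i k) U (nhds (b k))) (j : ℕ) (n l : ℤ) :
    Tendsto (fun i => wc (B i) j n l) U (nhds (wc b j n l)) := by
  induction j generalizing n with
  | zero => simp only [wc]; exact tendsto_const_nhds
  | succ j ih => simp only [wc]; exact (ih _).add ((h n).mul (ih _))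

lemma gF_tendsto {ι : Type*} (U : Filter ι) (m : ℕ) (B : ι → ℤ → ℝ) (b : ℤ → ℝ)
    (h : ∀ k, Tendsto (fun i => B i k) U (nhds (b k))) (k : ℤ) :
    Tendsto (fun i => gF m (B i) k) U (nhds (gF m b k)) :=
  (h k).mul (wc_tendsto U B b h _ _ _)

lemma wc_one_zero (j : ℕ) (n l : ℤ) (h : n + j < l) : wc (fun _ => 1) j n l = 0 := by
  induction j generalizing n with
  | zero => simp only [wc]; rw [if_neg]; push_cast at h; omega
  | succ j ih =>
    rw [wc, ih _ (by push_cast at h; omega), ih _ (by push_cast at h; omega)]; simp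

lemma wc_one (j i : ℕ) (n l : ℤ) (h : l = n + j - 2 * i) :
    wc (fun _ => 1) j n l = (j.choose i : ℝ) := by
  induction j generalizing n i with
  | zero =>
    rw [wc]
    cases i with
    | zero => simp at h; simp [h]
    | succ i => rw [if_neg]; · simp
                · push_cast at h; omega
  | succ j ih =>
    rw [wc]
    cases i with
    | zero =>
      rw [ih 0 _ (by push_cast at h ⊢; omega), wc_one_zero _ _ _ (by push_cast at h ⊢; omega)]
      simp
    | succ i =>
      rw [ih (i+1) _ (by push_cast at h ⊢; omega), ih i _ (by push_cast at h ⊢; omega),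
        Nat.choose_succ_succ]
      push_cast; ring

lemma gF_one (m : ℕ) (hm : 1 ≤ m) (k : ℤ) :
    gF m (fun _ => 1) k = ((2 * m - 1).choose (m - 1) : ℝ) := by
  unfold gF
  rw [wc_one (2 * m - 1) (m - 1) _ _ (by omega), one_mul]

/-- zig-zag lower bound -/
lemma wc_zigzag (b : ℤ → ℝ) (hb : ∀ k, 0 ≤ b k) (q : ℕ) (k : ℤ) :
    b k ^ q ≤ wc b (2 * q + 1) (k - 1) k := by
  induction q with
  | zero =>
    have : 0 ≤ b (k - 1) * wc b 0 (k - 1 - 1) k := mul_nonneg (hb _) (wc_nonneg b hb _ _ _)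
    have h2 : wc b 0 (k - 1 + 1) k = 1 := by simp [wc]
    rw [show 2 * 0 + 1 = 0 + 1 by norm_num, wc, h2]; simpa using this
  | succ q ih =>
    rw [show 2 * (q + 1) + 1 = (2 * q + 1) + 1 + 1 by ring, wc, wc]
    have h1 : 0 ≤ wc b (2 * q + 1) (k - 1 + 1 + 1) k := wc_nonneg b hb _ _ _
    have h2 : 0 ≤ b (k - 1) * wc b (2 * q + 1 + 1) (k - 1 - 1) k :=
      mul_nonneg (hb _) (wc_nonneg b hb _ _ _)
    have h3 := mul_le_mul_of_nonneg_left ih (hb k)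
    rw [show k - 1 + 1 = k by ring] at *
    rw [pow_succ]; linarith

lemma gF_ge (m : ℕ) (hm : 1 ≤ m) (b : ℤ → ℝ) (hb : ∀ k, 0 ≤ b k) (k : ℤ) :
    b k ^ m ≤ gF m b k := by
  obtain ⟨q, rfl⟩ : ∃ q, m = q + 1 := ⟨m - 1, by omega⟩
  have := mul_le_mul_of_nonneg_left (wc_zigzag b hb q k) (hb k)
  rw [gF, show 2 * (q + 1) - 1 = 2 * q + 1 by omega, pow_succ, mul_comm]
  exact this


def wR : ℤ × List Bool → ℤ × List Bool
  | (k, []) => (k, [])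
  | (k, a :: l) => (k + sg a, l ++ [a])

noncomputable def wd (f : ℤ → ℝ) : ℤ × List Bool → ℝ
  | (_, []) => 0
  | (k, a :: _) => if a then 0 else f k

lemma wE_append (k : ℤ) (l₁ l₂ : List Bool) : wE k (l₁ ++ l₂) = wE (wE k l₁) l₂ := by
  induction l₁ generalizing k with
  | nil => rfl
  | cons a l ih => simp [wE, ih]

lemma wD_append (f : ℤ → ℝ) (k : ℤ) (l₁ l₂ : List Bool) :
    wD f k (l₁ ++ l₂) = wD f k l₁ + wD f (wE k l₁) l₂ := by
  induction l₁ generalizing k with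
  | nil => simp [wD, wE]
  | cons a l ih => simp [wD, wE, ih, add_assoc]

lemma wE_add (k j : ℤ) (l : List Bool) : wE (k + j) l = wE k l + j := by
  induction l generalizing k with
  | nil => rfl
  | cons a l ih => simp only [wE]; rw [← ih]; congr 1; ring

lemma wE_R (q : ℤ × List Bool) : wE (wR q).1 (wR q).2 = (wR q).1 ↔ wE q.1 q.2 = q.1 := by
  obtain ⟨k, l⟩ := q
  cases l with
  | nil => simp [wR]
  | cons a l =>
    simp only [wR, wE_append, wE]
    constructor <;> intro h <;> omega

lemma wD_R (f : ℤ → ℝ) (q : ℤ × List Bool) (h : wE q.1 q.2 = q.1) :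
    wD f (wR q).1 (wR q).2 = wD f q.1 q.2 := by
  obtain ⟨k, l⟩ := q
  cases l with
  | nil => simp [wR]
  | cons a l =>
    simp only [wE] at h
    simp only [wR, wD_append, wD, h]
    ring

lemma wD_eq_sum_aux (f : ℤ → ℝ) (k : ℤ) (l₁ l₂ : List Bool) :
    ∑ i ∈ Finset.range l₁.length, wd f (wR^[i] (k, l₁ ++ l₂)) = wD f k l₁ := by
  induction l₁ generalizing k l₂ with
  | nil => simp [wD]
  | cons a l ih =>
    rw [List.length_cons, Finset.sum_range_succ']
    simp only [Function.iterate_succ, Function.comp]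
    have : wR (k, a :: l ++ l₂) = (k + sg a, l ++ (l₂ ++ [a])) := by simp [wR]
    rw [this, ih]
    simp [wd, wD, add_comm]

lemma wD_eq_sum (f : ℤ → ℝ) (k : ℤ) (l : List Bool) :
    wD f k l = ∑ i ∈ Finset.range l.length, wd f (wR^[i] (k, l)) := by
  have := wD_eq_sum_aux f k l []
  simpa using this.symm

/-- total sum over walks -/
noncomputable def wS (N : ℕ) (G : ℤ × List Bool → ℝ) : ℝ := ∑ l ∈ wl N, ∑' k : ℤ, G (k, l)

lemma wS_R (N : ℕ) (G : ℤ × List Bool → ℝ) : wS N (fun q => G (wR q)) = wS N G := by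
  unfold wS
  cases N with
  | zero => simp [wl, wR]
  | succ n =>
    refine Finset.sum_bij (fun l _ => (wR (0, l)).2) ?_ ?_ ?_ ?_
    · intro l hl
      rw [mem_wl] at *
      cases l with
      | nil => simp at hl
      | cons a l => simpa [wR] using hl
    · intro l hl l' hl' h
      rw [mem_wl] at *
      cases l with
      | nil => simp at hl
      | cons a l =>
        cases l' with
        | nil => simp at hl'
        | cons a' l' =>
          simp only [wR] at h
          have := List.append_inj' h rfl
          simp_all
    · intro l hl
      rw [mem_wl] at hl
      rcases List.eq_nil_or_concat l with rfl | ⟨l', a, rfl⟩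
      · simp at hl
      · refine ⟨a :: l', ?_, ?_⟩
        · rw [mem_wl]; simpa using hl
        · simp [wR]
    · intro l hl
      rw [mem_wl] at hl
      cases l with
      | nil => simp at hl
      | cons a l =>
        simp only [wR]
        exact (Equiv.addRight (sg a)).tsum_eq (fun k => G (k, l ++ [a]))

lemma wS_iter (N : ℕ) (G : ℤ × List Bool → ℝ) (i : ℕ) :
    wS N (fun q => G (wR^[i] q)) = wS N G := by
  induction i with
  | zero => simp
  | succ i ih =>
    have := wS_R N (fun q => G (wR^[i] q))
    simp only [Function.iterate_succ, Function.comp]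
    rw [this, ih]

lemma wl_R {N : ℕ} (q : ℤ × List Bool) (h : q.2.length = N) : (wR q).2.length = N := by
  obtain ⟨k, l⟩ := q
  cases l with
  | nil => simpa [wR] using h
  | cons a l => simpa [wR] using h

/-- comparison principle for `wD`, with positions within distance `N`. -/
lemma wD_le_of (f g : ℤ → ℝ) (k : ℤ) (l : List Bool) (N : ℕ) (k₀ : ℤ)
    (hk : |k - k₀| + l.length ≤ N)
    (h : ∀ q : ℤ, |q - k₀| ≤ N → f q ≤ g q) : wD f k l ≤ wD g k l := by
  induction l generalizing k with
  | nil => simp [wD]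
  | cons a l ih =>
    simp only [wD]
    have hs : sg a = 1 ∨ sg a = -1 := by cases a <;> simp [sg]
    have h1 : |k + sg a - k₀| + l.length ≤ N := by
      simp only [List.length_cons] at hk
      push_cast at hk
      have : |k + sg a - k₀| ≤ |k - k₀| + 1 := by
        have := abs_add_le (k - k₀) (sg a)
        have h3 : |sg a| = 1 := by rcases hs with hs | hs <;> rw [hs] <;> rfl
        rw [show k + sg a - k₀ = k - k₀ + sg a by ring]; omega
      omega
    have h2 := ih _ h1
    have h3 : f k ≤ g k := h k (by simp only [List.length_cons] at hk; push_cast at hk; omega)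
    split_ifs <;> linarith

lemma wD_mul_left (c : ℝ) (f : ℤ → ℝ) (k : ℤ) (l : List Bool) :
    wD (fun q => c * f q) k l = c * wD f k l := by
  induction l generalizing k with
  | nil => simp [wD]
  | cons a l ih => simp only [wD, ih]; split_ifs <;> ring

lemma wD_nonneg (f : ℤ → ℝ) (hf : ∀ q, 0 ≤ f q) (k : ℤ) (l : List Bool) : 0 ≤ wD f k l := by
  induction l generalizing k with
  | nil => simp [wD]
  | cons a l ih => simp only [wD]; have := ih (k + sg a); have := hf k; split_ifs <;> linarith

lemma wD_le_card (f : ℤ → ℝ) (M : ℝ) (hM : 0 ≤ M) (hf : ∀ q, f q ≤ M) (k : ℤ) (l : List Bool) :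
    wD f k l ≤ l.length * M := by
  induction l generalizing k with
  | nil => simp [wD]
  | cons a l ih =>
    simp only [wD, List.length_cons]; push_cast
    have := ih (k + sg a); have := hf k; split_ifs <;> linarith

lemma abs_wD_le (f : ℤ → ℝ) (k : ℤ) (l : List Bool) : |wD f k l| ≤ wD (fun q => |f q|) k l := by
  induction l generalizing k with
  | nil => simp [wD]
  | cons a l ih =>
    simp only [wD]
    refine (abs_add_le _ _).trans (add_le_add ?_ (ih _))
    split_ifs <;> simp

lemma wD_sub (f g : ℤ → ℝ) (k : ℤ) (l : List Bool) :
    wD (fun q => f q - g q) k l = wD f k l - wD g k l := by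
  induction l generalizing k with
  | nil => simp [wD]
  | cons a l ih => simp only [wD, ih]; split_ifs <;> ring

lemma wD_sq_le (f : ℤ → ℝ) (k : ℤ) (l : List Bool) :
    wD f k l ^ 2 ≤ l.length * wD (fun q => f q ^ 2) k l := by
  induction l generalizing k with
  | nil => simp [wD]
  | cons a l ih =>
    have h1 := ih (k + sg a)
    have h0 := wD_nonneg (fun q => f q ^ 2) (fun q => sq_nonneg _) (k + sg a) l
    simp only [wD, List.length_cons]
    push_cast
    cases a
    · simp only [Bool.false_eq_true, if_false]
      set d := wD f (k + sg false) l
      set e := wD (fun q => f q ^ 2) (k + sg false) l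
      set n : ℝ := (l.length : ℝ) with hn
      rcases Nat.eq_zero_or_pos l.length with h | h
      · have : n = 0 := by rw [hn, h]; simp
        rw [this] at h1 ⊢
        have hd : d = 0 := by nlinarith [sq_nonneg d]
        rw [hd]; nlinarith
      · have hn0 : 0 < n := by rw [hn]; exact_mod_cast h
        have h3 : d ^ 2 / n ≤ e := by rw [div_le_iff₀ hn0]; linarith
        have h4 : 2 * f k * d ≤ n * f k ^ 2 + d ^ 2 / n := by
          have : n * f k ^ 2 + d ^ 2 / n - 2 * f k * d = (n * f k - d) ^ 2 / n := by
            field_simp; ring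
          have h5 : 0 ≤ (n * f k - d) ^ 2 / n := by positivity
          linarith
        nlinarith
    · simp; nlinarith

lemma wW_exp (w : ℤ → ℝ) (k : ℤ) (l : List Bool) :
    wW (fun q => Real.exp (w q)) k l = Real.exp (wD w k l) := by
  induction l generalizing k with
  | nil => simp [wD, wW]
  | cons a l ih => simp only [wD, wW, ih, Real.exp_add]; split_ifs <;> simp

/-- zigzag list -/
def zz : ℕ → List Bool
  | 0 => []
  | n + 1 => false :: true :: zz n

lemma zz_length (n : ℕ) : (zz n).length = 2 * n := by
  induction n with
  | zero => rfl
  | succ n ih => simp [zz, ih]; ring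

lemma zz_E (n : ℕ) (k : ℤ) : wE k (zz n) = k := by
  induction n with
  | zero => rfl
  | succ n ih => simp [zz, wE, sg, ih]

lemma zz_D (n : ℕ) (f : ℤ → ℝ) (k : ℤ) : wD f k (zz n) = n * f k := by
  induction n with
  | zero => simp [zz, wD]
  | succ n ih => simp [zz, wD, sg, ih]; ring


lemma gF_eq (m : ℕ) (hm : 1 ≤ m) (b f : ℤ → ℝ) (k : ℤ) :
    f k * gF m b k =
      ∑ l ∈ wl (2 * m), (if wE k l = k then wW b k l else 0) * wd f (k, l) := by
  obtain ⟨n, hn⟩ : ∃ n, 2 * m = n + 1 := ⟨2 * m - 1, by omega⟩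
  rw [gF, hn, sum_wl_succ, Nat.add_sub_cancel, wc_eq_sum]
  have h0 : ∑ l ∈ wl n, (if wE k (true :: l) = k then wW b k (true :: l) else 0) *
      wd f (k, true :: l) = 0 := Finset.sum_eq_zero fun l _ => by simp [wd]
  rw [h0, zero_add, Finset.mul_sum, Finset.mul_sum]
  refine Finset.sum_congr rfl fun l _ => ?_
  simp only [wd, wE, wW, sg, Bool.false_eq_true, if_false, ← sub_eq_add_neg]
  split_ifs <;> ring

def wSum (N : ℕ) (G : ℤ × List Bool → ℝ) : Prop := ∀ l ∈ wl N, Summable fun k : ℤ => G (k, l)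

lemma wSum_R (N : ℕ) (G : ℤ × List Bool → ℝ) (h : wSum N G) : wSum N (fun q => G (wR q)) := by
  intro l hl
  cases l with
  | nil => exact h _ hl
  | cons a l =>
    simp only [wR]
    refine (Equiv.addRight (sg a)).summable_iff.2 (h (l ++ [a]) ?_)
    rw [mem_wl] at *; simpa using hl

lemma wSum_iter (N : ℕ) (G : ℤ × List Bool → ℝ) (h : wSum N G) (i : ℕ) :
    wSum N (fun q => G (wR^[i] q)) := by
  induction i with
  | zero => simpa using h
  | succ i ih =>
    have := wSum_R N _ ih
    simpa only [Function.iterate_succ, Function.comp] using this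

lemma inv_iter (Ψ : ℤ × List Bool → ℝ) (hΨ : ∀ q, Ψ (wR q) = Ψ q) (i : ℕ) (q : ℤ × List Bool) :
    Ψ (wR^[i] q) = Ψ q := by
  induction i generalizing q with
  | zero => rfl
  | succ i ih => rw [Function.iterate_succ_apply, ih, hΨ]

lemma wS_D (N : ℕ) (Ψ : ℤ × List Bool → ℝ) (hΨ : ∀ q, Ψ (wR q) = Ψ q) (f : ℤ → ℝ)
    (hs : wSum N (fun q => Ψ q * wd f q)) :
    wS N (fun q => Ψ q * wD f q.1 q.2) = N * wS N (fun q => Ψ q * wd f q) ∧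
    wSum N (fun q => Ψ q * wD f q.1 q.2) := by
  have key : ∀ l ∈ wl N, ∀ k : ℤ, Ψ (k, l) * wD f k l =
      ∑ i ∈ Finset.range N, (fun q => Ψ q * wd f q) (wR^[i] (k, l)) := by
    intro l hl k
    rw [mem_wl] at hl
    rw [wD_eq_sum, hl, Finset.mul_sum]
    refine Finset.sum_congr rfl fun i _ => ?_
    simp only [inv_iter Ψ hΨ]
  have hi := fun i => wSum_iter N _ hs i
  constructor
  · have : (N : ℝ) * wS N (fun q => Ψ q * wd f q) =
      ∑ i ∈ Finset.range N, wS N (fun q => (fun q => Ψ q * wd f q) (wR^[i] q)) := by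
      rw [Finset.sum_congr rfl (fun i _ => wS_iter N (fun q => Ψ q * wd f q) i)]
      simp
    rw [this]
    unfold wS
    rw [Finset.sum_comm]
    refine Finset.sum_congr rfl fun l hl => ?_
    rw [← Summable.tsum_finsetSum (fun i _ => hi i l hl)]
    exact tsum_congr fun k => key l hl k
  · intro l hl
    have := summable_sum (s := Finset.range N) (fun i _ => hi i l hl)
    refine this.congr fun k => ?_
    exact (key l hl k).symm

lemma wS_mono (N : ℕ) (G H : ℤ × List Bool → ℝ) (hG : wSum N G) (hH : wSum N H)
    (h : ∀ l ∈ wl N, ∀ k, G (k, l) ≤ H (k, l)) : wS N G ≤ wS N H :=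
  Finset.sum_le_sum fun l hl => (hG l hl).tsum_le_tsum (h l hl) (hH l hl)

lemma exists_rho (N : ℕ) (η : ℝ) (hη : 0 < η) (hη1 : η ≤ 1) :
    ∃ ρ : ℤ → ℝ, (∀ k, 0 < ρ k) ∧ Summable ρ ∧
      ∀ k q : ℤ, |q - k| ≤ N → |ρ q - ρ k| ≤ η * ρ k := by
  set δ : ℝ := η / (4 * (N + 1)) with hδ
  have hN : (0 : ℝ) ≤ N := Nat.cast_nonneg N
  have hδ0 : 0 < δ := by positivity
  have hδ1 : δ ≤ 1 / 4 := by
    rw [hδ, div_le_iff₀ (by positivity)]; nlinarith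
  have hδN : N * δ ≤ η / 4 := by
    rw [hδ, mul_div_assoc', div_le_div_iff₀ (by positivity) (by norm_num)]; nlinarith
  set r : ℝ := 1 - δ with hr
  have hr0 : 0 < r := by linarith
  have hr1 : r < 1 := by linarith
  have hrN : 1 - η / 4 ≤ r ^ N := by
    have := one_add_mul_le_pow (a := -δ) (by linarith) N
    rw [← sub_eq_add_neg] at this
    rw [← hr] at this
    linarith
  have hle : ∀ k q : ℤ, |q - k| ≤ N → r ^ N * r ^ q.natAbs ≤ r ^ k.natAbs := by
    intro k q h
    rw [← pow_add]
    apply pow_le_pow_of_le_one hr0.le hr1.le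
    have : |q - k| = (Int.natAbs (q - k) : ℤ) := by simp
    omega
  refine ⟨fun k => r ^ k.natAbs, fun k => by positivity, ?_, ?_⟩
  · apply Summable.of_nat_of_neg
    · simpa using summable_geometric_of_lt_one hr0.le hr1
    · simpa using summable_geometric_of_lt_one hr0.le hr1
  · intro k q h
    have h1 := hle k q h
    have h2 := hle q k (by rwa [abs_sub_comm])
    have hk : 0 < r ^ k.natAbs := by positivity
    have hq : 0 < r ^ q.natAbs := by positivity
    simp only
    set K := r ^ k.natAbs
    set Q := r ^ q.natAbs
    rw [abs_le]
    constructor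
    · nlinarith
    · have h3 : (1 - η / 4) * Q ≤ K := by nlinarith
      have h4 : Q ≤ 2 * K := by nlinarith
      nlinarith

lemma exp_bounds (x R : ℝ) (h : |x| ≤ R) :
    |Real.exp x - 1| ≤ Real.exp R * |x| ∧ Real.exp (-R) * x ^ 2 ≤ (Real.exp x - 1) * x := by
  have hR : 0 ≤ R := (abs_nonneg x).trans h
  rw [abs_le] at h
  have a1 := Real.add_one_le_exp x
  have a2 := Real.add_one_le_exp (-x)
  have e1 : Real.exp (-x) * Real.exp x = 1 := by rw [← Real.exp_add]; simp
  have p := Real.exp_pos x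
  have a3 : Real.exp x - 1 ≤ x * Real.exp x := by nlinarith
  have b1 : Real.exp x ≤ Real.exp R := Real.exp_le_exp.2 h.2
  have b2 : Real.exp (-R) ≤ Real.exp x := Real.exp_le_exp.2 h.1
  have b3 : Real.exp (-R) ≤ 1 := Real.exp_le_one_iff.2 (by linarith)
  have b4 : 1 ≤ Real.exp R := Real.one_le_exp hR
  rcases le_total 0 x with hx | hx
  · rw [abs_of_nonneg hx, abs_of_nonneg (by linarith)]
    refine ⟨by nlinarith, ?_⟩
    nlinarith [mul_nonneg hx hx]
  · rw [abs_of_nonpos hx, abs_of_nonpos (by nlinarith)]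
    refine ⟨by nlinarith, ?_⟩
    have : -x * Real.exp (-R) ≤ 1 - Real.exp x := by nlinarith
    nlinarith

theorem freud_uniq (m : ℕ) (hm : 1 ≤ m) (w : ℤ → ℝ) (M : ℝ) (hM : ∀ k, |w k| ≤ M)
    (h : ∀ k, gF m (fun q => Real.exp (w q)) k = gF m (fun _ => 1) k) (k : ℤ) : w k = 0 := by
  set N := 2 * m with hN
  have hM0 : 0 ≤ M := (abs_nonneg _).trans (hM 0)
  set B := Real.exp (N * M) with hB
  have hB1 : 1 ≤ B := Real.one_le_exp (by positivity)
  set K : ℝ := B * (B * (N * 2 * (N * 2 ^ N))) with hK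
  have hN1 : (1 : ℝ) ≤ N := by rw [hN]; exact_mod_cast (by omega : 1 ≤ 2 * m)
  have hK1 : 0 < K := by positivity
  obtain ⟨η, hη, hη1, hηK⟩ : ∃ η : ℝ, 0 < η ∧ η ≤ 1 ∧ η * K ≤ 1 / 2 := by
    refine ⟨min 1 (1 / (2 * K)), by positivity, min_le_left _ _, ?_⟩
    calc _ ≤ 1 / (2 * K) * K := by gcongr; exact min_le_right _ _
      _ = 1 / 2 := by field_simp
  obtain ⟨ρ, hρ0, hρs, hρ⟩ := exists_rho N η hη hη1
  have hρ2 : ∀ k q : ℤ, |q - k| ≤ N → ρ k ≤ 2 * ρ q := by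
    intro k q hq
    have := abs_le.1 (hρ q k (by rwa [abs_sub_comm]))
    nlinarith [hρ0 q]
  -- summability from domination
  have dom : ∀ (G : ℤ → ℝ) (C : ℝ), (∀ k, |G k| ≤ C * ρ k) → Summable G := fun G C hG =>
    Summable.of_norm_bounded (hρs.mul_left C) hG
  have hw2 : ∀ k, w k ^ 2 ≤ M ^ 2 := fun k => by
    rw [← sq_abs]; exact pow_le_pow_left₀ (abs_nonneg _) (hM k) 2
  set f : ℤ → ℝ := fun k => ρ k * w k with hf
  set g : ℤ → ℝ := fun k => ρ k * w k ^ 2 with hg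
  have hgs : Summable g := dom _ (M ^ 2) fun k => by
    rw [abs_of_nonneg (by have := hρ0 k; positivity)]
    nlinarith [hw2 k, hρ0 k]
  have hg0 : ∀ k, 0 ≤ g k := fun k => by have := hρ0 k; positivity
  -- basic bounds on walks
  have hy : ∀ l ∈ wl N, ∀ k, wD (fun q => |w q|) k l ≤ N * M := by
    intro l hl k
    rw [mem_wl] at hl
    have := wD_le_card (fun q => |w q|) M hM0 hM k l
    rwa [hl] at this
  have hx : ∀ l ∈ wl N, ∀ k, |wD w k l| ≤ N * M := fun l hl k =>
    (abs_wD_le w k l).trans (hy l hl k)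
  set Ψ : ℤ × List Bool → ℝ := fun q =>
    if wE q.1 q.2 = q.1 then Real.exp (wD w q.1 q.2) - 1 else 0 with hΨ
  have hΨR : ∀ q, Ψ (wR q) = Ψ q := by
    intro q
    simp only [hΨ]
    by_cases hq : wE q.1 q.2 = q.1
    · rw [if_pos hq, if_pos ((wE_R q).2 hq), wD_R w q hq]
    · rw [if_neg hq, if_neg (fun h => hq ((wE_R q).1 h))]
  have hΨb : ∀ l ∈ wl N, ∀ k, |Ψ (k, l)| ≤ B * (N * M) := by
    intro l hl k
    simp only [hΨ]
    split_ifs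
    · exact (exp_bounds _ _ (hx l hl k)).1.trans (by gcongr; exact hx l hl k)
    · simp; positivity
  have hfb : ∀ k l, |wd f (k, l)| ≤ M * ρ k := by
    intro k l
    have := hρ0 k
    cases l with
    | nil => simp [wd]; positivity
    | cons a l =>
      simp only [wd]
      split_ifs
      · simp; positivity
      · simp only [hf]; rw [abs_mul, abs_of_pos this]; nlinarith [hM k]
  have hs1 : wSum N (fun q => Ψ q * wd f q) := by
    intro l hl
    refine dom _ (B * (N * M) * M) fun k => ?_
    rw [abs_mul]
    calc _ ≤ (B * (N * M)) * (M * ρ k) := by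
          gcongr
          · exact hΨb l hl k
          · exact hfb k l
      _ = _ := by ring
  have hzero : wS N (fun q => Ψ q * wd f q) = 0 := by
    unfold wS
    rw [← Summable.tsum_finsetSum hs1]
    have : ∀ k : ℤ, ∑ l ∈ wl N, Ψ (k, l) * wd f (k, l) = 0 := by
      intro k
      have e1 := gF_eq m hm (fun q => Real.exp (w q)) f k
      have e2 := gF_eq m hm (fun _ => 1) f k
      rw [h k, e2, ← sub_eq_zero, ← Finset.sum_sub_distrib] at e1
      rw [← neg_eq_zero, ← Finset.sum_neg_distrib, ← e1]
      refine Finset.sum_congr rfl fun l _ => ?_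
      have h1 : wW (fun _ => (1 : ℝ)) k l = 1 := by
        have := wW_exp (fun _ => 0) k l
        simp only [Real.exp_zero] at this
        rw [this]
        have := wD_mul_left 0 (fun _ => 0) k l
        simp only [mul_zero, zero_mul] at this
        rw [this]; simp
      simp only [hΨ, wW_exp, h1]
      split_ifs <;> ring
    simp [this]
  obtain ⟨hD, hDs⟩ := wS_D N Ψ hΨR f hs1
  rw [hzero, mul_zero] at hD
  -- the auxiliary walk sums
  set G1 : ℤ × List Bool → ℝ := fun q =>
    if wE q.1 q.2 = q.1 then ρ q.1 * wD w q.1 q.2 ^ 2 else 0 with hG1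
  set G2 : ℤ × List Bool → ℝ := fun q => ρ q.1 * wD (fun q => |w q|) q.1 q.2 ^ 2 with hG2
  have hG2s : wSum N G2 := by
    intro l hl
    refine dom _ ((N * M) ^ 2) fun k => ?_
    have h1 := hy l hl k
    have h0 := wD_nonneg (fun q => |w q|) (fun q => abs_nonneg _) k l
    have := hρ0 k
    simp only [hG2]
    rw [abs_of_nonneg (by positivity), mul_comm]
    gcongr
  have hG1s : wSum N G1 := by
    intro l hl
    refine dom _ ((N * M) ^ 2) fun k => ?_
    have h1 := hx l hl k
    have := hρ0 k
    simp only [hG1]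
    split_ifs
    · rw [abs_of_nonneg (by positivity), mul_comm, ← sq_abs]
      gcongr
    · simp; positivity
  have hpt : ∀ l ∈ wl N, ∀ k, B⁻¹ * G1 (k, l) - η * B * G2 (k, l) ≤ Ψ (k, l) * wD f k l := by
    intro l hl k
    have h1 := hx l hl k
    have h2 := abs_wD_le w k l
    have hr := hρ0 k
    have h3 : |wD f k l - ρ k * wD w k l| ≤ η * ρ k * wD (fun q => |w q|) k l := by
      rw [← wD_mul_left, ← wD_sub, ← wD_mul_left]
      refine (abs_wD_le _ k l).trans ?_
      refine wD_le_of _ _ k l N k ?_ ?_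
      · rw [mem_wl] at hl; simp [hl]
      · intro q hq
        simp only [hf]
        rw [← sub_mul, abs_mul]
        exact mul_le_mul_of_nonneg_right (hρ k q hq) (abs_nonneg _)
    obtain ⟨h4, h5⟩ := exp_bounds _ _ h1
    simp only [hG1, hG2, hΨ]
    set x := wD w k l
    set y := wD (fun q => |w q|) k l
    set e := wD f k l
    have hy0 : 0 ≤ y := (abs_nonneg _).trans h2
    split_ifs
    · have h6 : |(Real.exp x - 1) * (e - ρ k * x)| ≤ η * B * (ρ k * y ^ 2) := by
        rw [abs_mul]
        calc _ ≤ (B * y) * (η * ρ k * y) := by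
              gcongr
              exact h4.trans (by gcongr)
          _ = _ := by ring
      have h7 := (abs_le.1 h6).1
      have h8 : B⁻¹ * (ρ k * x ^ 2) ≤ ρ k * ((Real.exp x - 1) * x) := by
        rw [hB, ← Real.exp_neg]; nlinarith
      have h9 : (Real.exp x - 1) * e = ρ k * ((Real.exp x - 1) * x) +
        (Real.exp x - 1) * (e - ρ k * x) := by ring
      rw [h9]; linarith
    · simp; positivity
  have hmain : B⁻¹ * wS N G1 - η * B * wS N G2 ≤ 0 := by
    have h1 : wSum N (fun q => B⁻¹ * G1 q - η * B * G2 q) := fun l hl =>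
      ((hG1s l hl).mul_left _).sub ((hG2s l hl).mul_left _)
    have h2 := wS_mono N _ _ h1 hDs hpt
    rw [hD] at h2
    refine le_trans (le_of_eq ?_) h2
    unfold wS
    rw [Finset.mul_sum, Finset.mul_sum, ← Finset.sum_sub_distrib]
    refine Finset.sum_congr rfl fun l hl => ?_
    rw [Summable.tsum_sub ((hG1s l hl).mul_left _) ((hG2s l hl).mul_left _), tsum_mul_left,
      tsum_mul_left]
  set S := ∑' k, g k with hS
  have hlow : S ≤ wS N G1 := by
    have hz : zz m ∈ wl N := by rw [mem_wl, zz_length]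
    have h1 : S ≤ ∑' k : ℤ, G1 (k, zz m) := by
      refine hgs.tsum_le_tsum (fun k => ?_) (hG1s _ hz)
      simp only [hG1, zz_E, zz_D, if_true, hg]
      have hr := hρ0 k
      have : (1 : ℝ) ≤ (m : ℝ) ^ 2 := one_le_pow₀ (by exact_mod_cast hm)
      rw [mul_pow]
      have := mul_le_mul_of_nonneg_right this (sq_nonneg (w k))
      rw [one_mul] at this
      gcongr
    refine h1.trans ?_
    refine Finset.single_le_sum (f := fun l => ∑' k : ℤ, G1 (k, l)) (fun l _ => ?_) hz
    refine tsum_nonneg fun k => ?_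
    simp only [hG1]
    have := hρ0 k
    split_ifs <;> positivity
  have hgd : ∀ k l, 0 ≤ wd g (k, l) ∧ wd g (k, l) ≤ g k := by
    intro k l
    cases l with
    | nil => simp [wd, hg0]
    | cons a l => simp only [wd]; split_ifs <;> simp [hg0]
  have hs2 : wSum N (fun q => (fun _ => (1 : ℝ)) q * wd g q) := by
    intro l hl
    refine Summable.of_nonneg_of_le (fun k => ?_) (fun k => ?_) hgs
    · simpa using (hgd k l).1
    · simpa using (hgd k l).2
  obtain ⟨hE, hEs⟩ := wS_D N (fun _ => 1) (fun _ => rfl) g hs2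
  have hup : wS N G2 ≤ N * 2 * (N * 2 ^ N) * S := by
    have h1 : wS N (fun q => (fun _ => (1 : ℝ)) q * wd g q) ≤ 2 ^ N * S := by
      unfold wS
      rw [← card_wl, ← nsmul_eq_mul]
      refine Finset.sum_le_card_nsmul _ _ _ fun l hl => ?_
      refine (hs2 l hl).tsum_le_tsum (fun k => ?_) hgs
      simpa using (hgd k l).2
    have h2 : wS N G2 ≤ wS N (fun q => (N * 2) * ((fun _ => (1 : ℝ)) q * wD g q.1 q.2)) := by
      refine wS_mono N _ _ hG2s (fun l hl => (hEs l hl).mul_left _) fun l hl k => ?_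
      simp only [hG2]
      have h3 := wD_sq_le (fun q => |w q|) k l
      have hl' := hl
      rw [mem_wl] at hl
      rw [hl] at h3
      have h4 : ρ k * wD (fun q => |w q| ^ 2) k l ≤ 2 * wD g k l := by
        rw [← wD_mul_left, ← wD_mul_left]
        refine wD_le_of _ _ k l N k (by simp [hl]) fun q hq => ?_
        simp only [hg, sq_abs]
        nlinarith [hρ2 k q hq, sq_nonneg (w q)]
      have hr := hρ0 k
      calc ρ k * wD (fun q => |w q|) k l ^ 2
          ≤ ρ k * (N * wD (fun q => |w q| ^ 2) k l) := by gcongr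
        _ = N * (ρ k * wD (fun q => |w q| ^ 2) k l) := by ring
        _ ≤ N * (2 * wD g k l) := by gcongr
        _ = _ := by ring
    have h5 : wS N (fun q => (N * 2 : ℝ) * ((fun _ => (1 : ℝ)) q * wD g q.1 q.2)) =
        (N * 2) * wS N (fun q => (fun _ => (1 : ℝ)) q * wD g q.1 q.2) := by
      unfold wS
      rw [Finset.mul_sum]
      exact Finset.sum_congr rfl fun l _ => tsum_mul_left
    rw [h5, hE] at h2
    refine h2.trans ?_
    calc (N * 2 : ℝ) * (N * wS N (fun q => (fun _ => (1 : ℝ)) q * wd g q))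
        ≤ N * 2 * (N * (2 ^ N * S)) := by gcongr
      _ = _ := by ring
  have hS0 : S ≤ 0 := by
    have hBp : 0 < B := by positivity
    have h1 : wS N G1 ≤ B * (η * B * wS N G2) := by
      have : B⁻¹ * wS N G1 ≤ η * B * wS N G2 := by linarith
      rwa [inv_mul_le_iff₀ hBp] at this
    have h2 : B * (η * B * wS N G2) ≤ η * K * S := by
      calc _ ≤ B * (η * B * (N * 2 * (N * 2 ^ N) * S)) := by gcongr
        _ = _ := by rw [hK]; ring
    have h3 : 0 ≤ S := tsum_nonneg hg0
    nlinarith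
  have h1 : g k ≤ S := hgs.le_tsum k fun j _ => hg0 j
  have h2 : g k ≤ 0 := h1.trans hS0
  have h3 : w k ^ 2 ≤ 0 := by
    by_contra hc
    push Not at hc
    have := mul_pos (hρ0 k) hc
    simp only [hg] at h2
    linarith
  exact pow_eq_zero_iff (two_ne_zero) |>.1 (le_antisymm h3 (sq_nonneg _))

lemma exponent_le (m : ℕ) (hm : 2 ≤ m) (t x : ℝ) :
    t * x ^ 2 - x ^ (2 * m) ≤ (1 + (t + 1) ^ 2) + (-1 * x ^ 2) := by
  have h : (x ^ 2) ^ 2 - 1 ≤ (x ^ 2) ^ m := by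
    rcases le_total 1 (x ^ 2) with h | h
    · have := pow_le_pow_right₀ h hm; linarith
    · have h1 : (x ^ 2) ^ 2 ≤ 1 := pow_le_one₀ (sq_nonneg _) h
      have h2 : 0 ≤ (x ^ 2) ^ m := by positivity
      linarith
  rw [pow_mul]
  nlinarith [sq_nonneg (2 * x ^ 2 - (t + 1)), sq_nonneg (t + 1)]

lemma integrableOn_pow (m : ℕ) (hm : 2 ≤ m) (s t : ℝ) (hs : -1 < s) :
    IntegrableOn (fun x : ℝ => x ^ s * Real.exp (t * x ^ 2 - x ^ (2 * m))) (Set.Ioi 0) := by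
  have h := (integrableOn_rpow_mul_exp_neg_mul_sq (b := 1) one_pos hs).const_mul
    (Real.exp (1 + (t + 1) ^ 2))
  refine Integrable.mono' h ?_ ?_
  · refine ContinuousOn.aestronglyMeasurable ?_ measurableSet_Ioi
    refine ContinuousOn.mul ?_ (by fun_prop)
    exact fun x hx => (continuousAt_rpow_const x s (Or.inl (ne_of_gt hx))).continuousWithinAt
  · refine (ae_restrict_iff' measurableSet_Ioi).2 (Eventually.of_forall fun x hx => ?_)
    have hx0 : 0 < x ^ s := rpow_pos_of_pos hx s
    rw [Real.norm_of_nonneg (by positivity)]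
    have := Real.exp_le_exp.2 (exponent_le m hm t x)
    rw [Real.exp_add] at this
    nlinarith

lemma integrableOn_poly (m : ℕ) (hm : 2 ≤ m) (s t : ℝ) (hs : -1 < s) (p : ℝ[X]) :
    IntegrableOn (fun x : ℝ => p.eval x * (x ^ s * Real.exp (t * x ^ 2 - x ^ (2 * m))))
      (Set.Ioi 0) := by
  induction p using Polynomial.induction_on' with
  | add p q hp hq =>
    refine (Integrable.add hp hq).congr (Eventually.of_forall fun x => ?_)
    simp only [Pi.add_apply, eval_add]; ring
  | monomial n a =>
    have h := (integrableOn_pow m hm (s + n) t (by have : (0:ℝ) ≤ n := n.cast_nonneg; linarith)).const_mul a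
    refine IntegrableOn.congr_fun h (fun x hx => ?_) measurableSet_Ioi
    simp only [eval_monomial]
    rw [rpow_add hx, rpow_natCast]; ring

/-- half-line integration by parts -/
lemma half_ibp (m : ℕ) (hm : 2 ≤ m) (lam t : ℝ) (hlam : -1 < lam) (q : ℝ[X]) :
    ∫ x in Set.Ioi (0 : ℝ), (C (2 * lam + 2) * q + X * derivative q + C (2 * t) * X ^ 2 * q
      - C (2 * m : ℝ) * X ^ (2 * m) * q).eval x *
      (x ^ (2 * lam + 1) * Real.exp (t * x ^ 2 - x ^ (2 * m))) = 0 := by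
  set F : ℝ → ℝ := fun x => q.eval x * (x ^ (2 * lam + 2) * Real.exp (t * x ^ 2 - x ^ (2 * m)))
    with hF
  have hderInt := integrableOn_poly m hm (2 * lam + 1) t (by linarith)
    (C (2 * lam + 2) * q + X * derivative q + C (2 * t) * X ^ 2 * q
      - C (2 * m : ℝ) * X ^ (2 * m) * q)
  have hFint : IntegrableOn F (Set.Ioi 0) := integrableOn_poly m hm (2 * lam + 2) t (by linarith) q
  have hder : ∀ x ∈ Set.Ioi (0 : ℝ), HasDerivAt F
      ((C (2 * lam + 2) * q + X * derivative q + C (2 * t) * X ^ 2 * q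
      - C (2 * m : ℝ) * X ^ (2 * m) * q).eval x *
      (x ^ (2 * lam + 1) * Real.exp (t * x ^ 2 - x ^ (2 * m)))) x := by
    intro x hx
    have hx0 : x ≠ 0 := ne_of_gt hx
    have h1 := q.hasDerivAt x
    have h2 := Real.hasDerivAt_rpow_const (x := x) (p := 2 * lam + 2) (Or.inl hx0)
    have h3 : HasDerivAt (fun x : ℝ => t * x ^ 2 - x ^ (2 * m))
        (t * (2 * x) - (2 * m : ℕ) * x ^ (2 * m - 1)) x := by
      have a := (hasDerivAt_pow 2 x).const_mul t
      have b := hasDerivAt_pow (2 * m) x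
      exact (a.fun_sub b).congr_deriv (by simp)
    have h4 := h1.mul (h2.mul h3.exp)
    refine h4.congr_deriv ?_
    simp only [eval_add, eval_sub, eval_mul, eval_C, eval_X, eval_pow]
    have e1 : x ^ (2 * lam + 2) = x * x ^ (2 * lam + 1) := by
      rw [show 2 * lam + 2 = 1 + (2 * lam + 1) by ring, rpow_add hx, rpow_one]
    have e2 : (2 * lam + 2 - 1) = 2 * lam + 1 := by ring
    have e3 : x ^ (2 * m) = x * x ^ (2 * m - 1) := by
      rw [← pow_succ']; congr 1; omega
    simp only [Pi.mul_apply]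
    rw [e2, e1]
    generalize Real.exp (t * x ^ 2 - x ^ (2 * m)) = E
    rw [e3]
    push_cast
    ring
  have htop : Tendsto F atTop (nhds 0) :=
    tendsto_zero_of_hasDerivAt_of_integrableOn_Ioi hder hderInt hFint
  have hF0 : F 0 = 0 := by
    simp only [hF]
    rw [zero_rpow (by linarith)]; simp
  have hcont : ContinuousWithinAt F (Set.Ici 0) 0 := by
    apply ContinuousAt.continuousWithinAt
    refine ContinuousAt.mul q.continuous.continuousAt (ContinuousAt.mul ?_ (by fun_prop))
    exact continuousAt_rpow_const _ _ (Or.inr (by linarith))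
  rw [integral_Ioi_of_hasDerivAt_of_tendsto hcont hder hderInt htop, hF0, sub_zero]

lemma weight_neg (m : ℕ) (lam t x : ℝ) : freudWeight m lam t (-x) = freudWeight m lam t x := by
  unfold freudWeight
  rw [abs_neg, neg_sq, pow_mul (-x), neg_sq, ← pow_mul]

lemma weight_pos_eq (m : ℕ) (lam t x : ℝ) (hx : 0 < x) : freudWeight m lam t x =
    x ^ (2 * lam + 1) * Real.exp (t * x ^ 2 - x ^ (2 * m)) := by
  unfold freudWeight; rw [abs_of_pos hx]

lemma integrable_poly (m : ℕ) (hm : 2 ≤ m) (lam t : ℝ) (hlam : -1 < lam) (p : ℝ[X]) :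
    Integrable (fun x : ℝ => p.eval x * freudWeight m lam t x) := by
  have key : ∀ p : ℝ[X], IntegrableOn (fun x : ℝ => p.eval x * freudWeight m lam t x)
      (Set.Ioi 0) := fun p =>
    (integrableOn_poly m hm (2 * lam + 1) t (by linarith) p).congr_fun
      (fun x hx => by rw [weight_pos_eq m lam t x hx]) measurableSet_Ioi
  rw [← integrableOn_univ, ← Set.Iio_union_Ici (a := (0 : ℝ)), integrableOn_union,
    integrableOn_Ici_iff_integrableOn_Ioi]
  refine ⟨?_, key p⟩
  rw [← (Measure.measurePreserving_neg (volume : Measure ℝ)).integrableOn_comp_preimage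
      (Homeomorph.neg ℝ).measurableEmbedding]
  have := key (p.comp (-X))
  simp only [Set.neg_preimage, Set.neg_Iio, neg_zero]
  refine this.congr_fun (fun x _ => ?_) measurableSet_Ioi
  simp [weight_neg]

/-- the moment functional -/
noncomputable def fL (m : ℕ) (lam t : ℝ) (p : ℝ[X]) : ℝ := ∫ x : ℝ, p.eval x * freudWeight m lam t x

lemma fL_split (m : ℕ) (hm : 2 ≤ m) (lam t : ℝ) (hlam : -1 < lam) (p : ℝ[X]) :
    fL m lam t p =
      (∫ x in Set.Ioi (0:ℝ), (p.comp (-X)).eval x *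
        (x ^ (2 * lam + 1) * Real.exp (t * x ^ 2 - x ^ (2 * m)))) +
      ∫ x in Set.Ioi (0:ℝ), p.eval x *
        (x ^ (2 * lam + 1) * Real.exp (t * x ^ 2 - x ^ (2 * m))) := by
  have hi := integrable_poly m hm lam t hlam p
  rw [fL, ← intervalIntegral.integral_Iic_add_Ioi (b := 0) hi.integrableOn hi.integrableOn]
  congr 1
  · have := integral_comp_neg_Ioi (0:ℝ) (fun x : ℝ => p.eval x * freudWeight m lam t x)
    rw [neg_zero] at this
    rw [← this]
    refine setIntegral_congr_fun measurableSet_Ioi fun x hx => ?_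
    simp only [weight_neg, weight_pos_eq m lam t x hx]
    simp
  · refine setIntegral_congr_fun measurableSet_Ioi fun x hx => ?_
    simp only [weight_pos_eq m lam t x hx]

lemma fL_ibp (m : ℕ) (hm : 2 ≤ m) (lam t : ℝ) (hlam : -1 < lam) (q : ℝ[X]) :
    fL m lam t (C (2 * lam + 2) * q + X * derivative q + C (2 * t) * X ^ 2 * q
      - C (2 * m : ℝ) * X ^ (2 * m) * q) = 0 := by
  rw [fL_split m hm lam t hlam, half_ibp m hm lam t hlam q, add_zero]
  refine Eq.trans ?_ (half_ibp m hm lam t hlam (q.comp (-X)))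
  congr 1
  funext x
  congr 2
  simp [derivative_comp, pow_mul]

lemma fL_add (m : ℕ) (hm : 2 ≤ m) (lam t : ℝ) (hlam : -1 < lam) (p q : ℝ[X]) :
    fL m lam t (p + q) = fL m lam t p + fL m lam t q := by
  unfold fL
  rw [← integral_add (integrable_poly m hm lam t hlam p) (integrable_poly m hm lam t hlam q)]
  simp only [eval_add, add_mul]

lemma fL_C_mul (m : ℕ) (lam t : ℝ) (a : ℝ) (p : ℝ[X]) :
    fL m lam t (C a * p) = a * fL m lam t p := by
  unfold fL
  rw [← integral_const_mul]
  simp only [eval_mul, eval_C, mul_assoc]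

lemma fL_one_pos (m : ℕ) (hm : 2 ≤ m) (lam t : ℝ) (hlam : -1 < lam) : 0 < fL m lam t 1 := by
  rw [fL, integral_pos_iff_support_of_nonneg]
  · have : Set.Ioi (0:ℝ) ⊆ Function.support fun x : ℝ => (1 : ℝ[X]).eval x * freudWeight m lam t x := by
      intro x hx
      have hx' : 0 < x ^ (2 * lam + 1) := rpow_pos_of_pos hx _
      rw [Function.mem_support, weight_pos_eq m lam t x hx]
      simp [Real.exp_ne_zero, hx'.ne']
    refine lt_of_lt_of_le ?_ (measure_mono this)
    simp
  · intro x
    simp only [eval_one, one_mul, freudWeight, Pi.zero_apply]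
    positivity
  · exact integrable_poly m hm lam t hlam 1

lemma wc_zero_of_lt (b : ℤ → ℝ) (j : ℕ) (n l : ℤ) (h : n + j < l) : wc b j n l = 0 := by
  induction j generalizing n with
  | zero => simp only [wc]; rw [if_neg]; push_cast at h; omega
  | succ j ih =>
    rw [wc, ih _ (by push_cast at h; omega), ih _ (by push_cast at h; omega)]; simp

lemma wc_top (b : ℤ → ℝ) (j : ℕ) (n l : ℤ) (h : n + j = l) : wc b j n l = 1 := by
  induction j generalizing n with
  | zero => simp only [wc]; rw [if_pos]; push_cast at h; omega
  | succ j ih =>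
    rw [wc, ih _ (by push_cast at h; omega), wc_zero_of_lt _ _ _ _ (by push_cast at h; omega)]
    simp

theorem freud_abstract (m : ℕ) (hm : 2 ≤ m) (b : ℤ → ℝ) (hb : ∀ k, 0 ≤ b k) (t E L : ℝ)
    (hE : ∀ n : ℕ, |2 * m * gF m b n - 2 * t * b n - n| ≤ E) (hL : 0 < L)
    (hLm : 2 * m * ((2 * m - 1).choose (m - 1) : ℝ) * L ^ m = 1) :
    Tendsto (fun n : ℕ => b n / (n : ℝ) ^ ((1 : ℝ) / (m : ℝ))) atTop (nhds L) := by
  have hm1 : 1 ≤ m := by omega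
  have hmR : (2 : ℝ) ≤ m := by exact_mod_cast hm
  have hE0 : 0 ≤ E := (abs_nonneg _).trans (hE 0)
  set B0 : ℝ := max 1 (2 * |t|) with hB0
  have hB01 : 1 ≤ B0 := le_max_left _ _
  have hB02 : 2 * |t| ≤ B0 := le_max_right _ _
  set C2 : ℝ := B0 ^ m + 1 + E with hC2
  have hC20 : 0 < C2 := by positivity
  have hup : ∀ n : ℕ, 1 ≤ n → b n ^ m ≤ C2 * n := by
    intro n hn
    have hnR : (1 : ℝ) ≤ n := by exact_mod_cast hn
    have h1 := gF_ge m hm1 b hb n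
    have h2 := (abs_le.1 (hE n)).2
    have hbn := hb n
    rcases le_total (b n) B0 with h | h
    · have h3 : b n ^ m ≤ B0 ^ m := pow_le_pow_left₀ hbn h m
      have h4 : 0 ≤ B0 ^ m := by positivity
      nlinarith
    · have h3 : 2 * t * b n ≤ b n ^ m := by
        have h4 : b n ^ 2 ≤ b n ^ m := pow_le_pow_right₀ (hB01.trans h) hm
        have h5 : t ≤ |t| := le_abs_self t
        nlinarith
      have h4 : 0 ≤ B0 ^ m := by positivity
      have h5 : 0 ≤ b n ^ m := by positivity
      have h6 : 2 * b n ^ m ≤ 2 * m * gF m b n := by nlinarith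
      nlinarith
  set s : ℕ → ℝ := fun n => (n : ℝ) ^ ((1 : ℝ) / (m : ℝ)) with hs
  have hsm : ∀ n, s n ^ m = n := by
    intro n
    simp only [hs]
    rw [← rpow_natCast, ← rpow_mul (by positivity), one_div, inv_mul_cancel₀ (by positivity),
      rpow_one]
  have hspos : ∀ n, 1 ≤ n → 0 < s n := fun n hn => rpow_pos_of_pos (by exact_mod_cast hn) _
  have hsn : Tendsto (fun n : ℕ => s n / n) atTop (nhds 0) := by
    have h1 : Tendsto (fun x : ℝ => x ^ (-(1 - 1 / (m:ℝ)))) atTop (nhds 0) :=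
      tendsto_rpow_neg_atTop (by
        rw [sub_pos, div_lt_one (by positivity)]; linarith)
    refine (h1.comp tendsto_natCast_atTop_atTop).congr' ?_
    filter_upwards [eventually_ge_atTop 1] with n hn
    have hn0 : (0 : ℝ) < n := by exact_mod_cast hn
    simp only [Function.comp, hs]
    rw [neg_sub, rpow_sub hn0, rpow_one]
  set x : ℕ → ℤ → ℝ := fun N k => (L * s N)⁻¹ * b (N + k) with hx
  set C3 : ℝ := max 1 (2 * C2 / L ^ m) with hC3
  have hC31 : 1 ≤ C3 := le_max_left _ _
  have hxb : ∀ k : ℤ, ∀ᶠ N : ℕ in atTop, x N k ∈ Set.Icc 0 C3 := by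
    intro k
    filter_upwards [eventually_ge_atTop (k.natAbs + 1)] with N hN
    have hN1 : 1 ≤ N := by omega
    have hsp := hspos N hN1
    refine ⟨mul_nonneg (by positivity) (hb _), ?_⟩
    by_contra hc
    push Not at hc
    obtain ⟨n, hn⟩ : ∃ n : ℕ, (n : ℤ) = N + k := ⟨(N + k).toNat, by omega⟩
    have h1 := hup n (by omega)
    have hx0 : 1 < x N k := hC31.trans_lt hc
    have h2 : x N k ≤ x N k ^ m := le_self_pow₀ hx0.le (by omega)
    have h3 : x N k ^ m ≤ 2 * C2 / L ^ m := by
      simp only [hx]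
      rw [mul_pow, inv_pow, mul_pow, hsm, ← hn]
      have hn2 : (n : ℝ) ≤ 2 * N := by
        have : n ≤ 2 * N := by omega
        exact_mod_cast this
      have hN0 : (0 : ℝ) < N := by exact_mod_cast hN1
      rw [inv_mul_le_iff₀ (by positivity)]
      have : L ^ m * N * (2 * C2 / L ^ m) = C2 * (2 * N) := by field_simp
      rw [this]
      exact h1.trans (by gcongr)
    have h4 : 2 * C2 / L ^ m ≤ C3 := le_max_right _ _
    linarith
  set ch : ℝ := ((2 * m - 1).choose (m - 1) : ℝ) with hch
  have hch1 : 1 ≤ ch := by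
    have : 0 < (2 * m - 1).choose (m - 1) := Nat.choose_pos (by omega)
    rw [hch]; exact_mod_cast this
  have hg : ∀ k : ℤ, Tendsto (fun N : ℕ => gF m (x N) k) atTop (nhds ch) := by
    intro k
    rw [tendsto_iff_dist_tendsto_zero]
    set A : ℝ := ch * (|(k : ℝ)| + E) with hA
    set A' : ℝ := ch * (2 * |t| * C3 * L) with hA'
    have hlim : Tendsto (fun N : ℕ => A / N + A' * (s N / N)) atTop (nhds 0) := by
      have := (tendsto_const_div_atTop_nhds_zero_nat A).add (hsn.const_mul A')
      simpa using this
    refine squeeze_zero' (Eventually.of_forall fun _ => dist_nonneg) ?_ hlim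
    filter_upwards [eventually_ge_atTop (k.natAbs + 1), hxb k] with N hN hxN
    have hN1 : 1 ≤ N := by omega
    have hN0 : (0 : ℝ) < N := by exact_mod_cast hN1
    have hsp := hspos N hN1
    obtain ⟨n, hn⟩ : ∃ n : ℕ, (n : ℤ) = N + k := ⟨(N + k).toNat, by omega⟩
    have e1 : gF m (x N) k = (L * s N)⁻¹ ^ m * gF m b n := by
      rw [hn, ← gF_shift m b N k]
      exact gF_scale m hm1 (fun j => b (N + j)) _ (by positivity) k
    have e2 : (L * s N)⁻¹ ^ m = 2 * m * ch / N := by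
      rw [inv_pow, mul_pow, hsm]
      field_simp
      linarith
    have hnk : (n : ℝ) = N + k := by exact_mod_cast hn
    have hbn : b n = x N k * (L * s N) := by
      simp only [hx]; rw [hn]; field_simp
    have e3 : gF m (x N) k - ch = ch / N * ((2 * m * gF m b n - 2 * t * b n - n) + k + 2 * t * b n) := by
      rw [e1, e2, hnk]; field_simp; ring
    rw [Real.dist_eq, e3, abs_mul, abs_of_pos (by positivity)]
    have h5 : |(2 * m * gF m b n - 2 * t * b n - n) + k + 2 * t * b n| ≤
        E + |(k : ℝ)| + 2 * |t| * (C3 * (L * s N)) := by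
      refine (abs_add_le _ _).trans (add_le_add ((abs_add_le _ _).trans (add_le_add (hE n) le_rfl)) ?_)
      rw [abs_mul, abs_mul, abs_two, abs_of_nonneg (hb _), hbn]
      gcongr
      exact hxN.2
    calc _ ≤ ch / N * (E + |(k : ℝ)| + 2 * |t| * (C3 * (L * s N))) := by gcongr
      _ = _ := by rw [hA, hA']; ring
  rw [tendsto_iff_ultrafilter]
  intro U hU
  have hex : ∀ k : ℤ, ∃ y ∈ Set.Icc (0:ℝ) C3, Tendsto (fun N => x N k) U (nhds y) := by
    intro k
    have h1 : ∀ᶠ N in (U : Filter ℕ), x N k ∈ Set.Icc 0 C3 := hU (hxb k)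
    exact (isCompact_Icc (a := (0:ℝ)) (b := C3)).ultrafilter_le_nhds (U.map fun N => x N k)
      (by rw [le_principal_iff]; exact h1)
  choose y hy hyt using hex
  have hgy : ∀ k, gF m y k = ch := fun k =>
    tendsto_nhds_unique (gF_tendsto _ m x y hyt k) ((hg k).mono_left hU)
  set D : ℝ := (1 + C3) ^ (2 * m - 1) with hD
  have hD0 : 0 < D := by positivity
  have hylow : ∀ k, D⁻¹ ≤ y k := by
    intro k
    have h1 := hgy k
    have h2 := wc_le y (fun k => (hy k).1) C3 (fun k => (hy k).2) (2 * m - 1) (k - 1) k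
    rw [gF] at h1
    have h3 := mul_le_mul_of_nonneg_left h2 (hy k).1
    rw [h1] at h3
    rw [inv_le_iff_one_le_mul₀ hD0]
    linarith
  have hypos : ∀ k, 0 < y k := fun k => (by positivity : 0 < D⁻¹).trans_le (hylow k)
  have hw := freud_uniq m hm1 (fun k => Real.log (y k)) (max (-Real.log D⁻¹) (Real.log C3)) (by
    intro k
    rw [abs_le]
    constructor
    · have h1 := Real.log_le_log (by positivity) (hylow k)
      have h2 := le_max_left (-Real.log D⁻¹) (Real.log C3)
      linarith
    · exact (Real.log_le_log (hypos k) (hy k).2).trans (le_max_right _ _)) (by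
    intro k
    simp only [Real.exp_log (hypos _)]
    rw [gF_one m hm1]; exact hgy k) 0
  have hy0 : y 0 = 1 := by
    rw [← Real.exp_log (hypos 0), hw, Real.exp_zero]
  have h1 := (hyt 0).const_mul L
  rw [hy0, mul_one] at h1
  refine h1.congr' ?_
  have h2 : ∀ᶠ N in (U : Filter ℕ), 1 ≤ N := hU (eventually_ge_atTop 1)
  filter_upwards [h2] with N hN
  have := hspos N hN
  simp only [hx, add_zero]
  change L * ((L * s N)⁻¹ * b N) = b N / s N
  field_simp

theorem poch_eq (m : ℕ) (hm : 1 ≤ m) :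
    (2 * m * ((2 * m - 1).choose (m - 1) : ℝ)) * (Nat.factorial (m - 1) : ℝ) =
      4 ^ m * (ascPochhammer ℝ m).eval ((1 : ℝ) / 2) := by
  have h : ∀ m : ℕ, 4 ^ m * (ascPochhammer ℝ m).eval ((1 : ℝ) / 2) * (m.factorial : ℝ) =
      ((2 * m).factorial : ℝ) := by
    intro m
    induction m with
    | zero => simp
    | succ m ih =>
      rw [ascPochhammer_succ_eval, show 2 * (m + 1) = 2 * m + 1 + 1 by ring, Nat.factorial_succ,
        Nat.factorial_succ, Nat.factorial_succ]
      push_cast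
      rw [← ih]; ring
  obtain ⟨q, rfl⟩ : ∃ q, m = q + 1 := ⟨m - 1, by omega⟩
  have h1 := h (q + 1)
  have h2 := Nat.choose_mul_factorial_mul_factorial (n := 2 * q + 1) (k := q) (by omega)
  rw [show 2 * q + 1 - q = q + 1 by omega] at h2
  have h2R : ((2 * q + 1).choose q : ℝ) * (q.factorial : ℝ) * ((q + 1).factorial : ℝ) =
      ((2 * q + 1).factorial : ℝ) := by exact_mod_cast h2
  rw [show 2 * (q + 1) - 1 = 2 * q + 1 by omega, Nat.add_sub_cancel]
  rw [show 2 * (q + 1) = 2 * q + 1 + 1 by ring, Nat.factorial_succ (2 * q + 1)] at h1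
  push_cast at h1 ⊢
  have hf : ((q + 1).factorial : ℝ) ≠ 0 := by positivity
  apply mul_right_cancel₀ hf
  rw [h1, ← h2R]; ring

theorem freud_conjecture_asymptotics (m : ℕ) (hm : 2 ≤ m) (lam t : ℝ) (hlam : -1 < lam)
    (P : ℕ → Polynomial ℝ) (β : ℕ → ℝ)
    (hmonic : ∀ n, (P n).Monic) (hdeg : ∀ n, (P n).natDegree = n)
    (horth : ∀ j k, j ≠ k →
      ∫ x : ℝ, (P j).eval x * (P k).eval x * freudWeight m lam t x = 0)
    (hβpos : ∀ n, 1 ≤ n → 0 < β n)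
    (hP0 : P 0 = 1) (hP1 : P 1 = X)
    (hrec : ∀ n, 1 ≤ n → P (n + 1) = X * P n - C (β n) * P (n - 1)) :
    Tendsto (fun n : ℕ => β n / (n : ℝ) ^ ((1 : ℝ) / (m : ℝ))) atTop
      (nhds ((1 / 4) *
        ((Nat.factorial (m - 1) : ℝ) / (ascPochhammer ℝ m).eval ((1 : ℝ) / 2))
          ^ ((1 : ℝ) / (m : ℝ)))) := by
  set b : ℤ → ℝ := fun k => if 1 ≤ k then β k.toNat else 0 with hb
  have hbn : ∀ n : ℕ, 1 ≤ n → b n = β n := by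
    intro n hn
    simp only [hb]; rw [if_pos (by exact_mod_cast hn)]; simp
  have hb0 : b 0 = 0 := by simp [hb]
  have hbnn : ∀ k, 0 ≤ b k := by
    intro k; simp only [hb]; split_ifs with h
    · exact (hβpos _ (by omega)).le
    · exact le_rfl
  set ℓ := fL m lam t with hℓ
  have ladd : ∀ p q, ℓ (p + q) = ℓ p + ℓ q := fL_add m hm lam t hlam
  have lC : ∀ a p, ℓ (C a * p) = a * ℓ p := fL_C_mul m lam t
  have lorth : ∀ j k, j ≠ k → ℓ (P j * P k) = 0 := by
    intro j k hjk
    have := horth j k hjk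
    simp only [hℓ, fL, eval_mul]; exact this
  set h : ℕ → ℝ := fun n => ℓ (P n * P n) with hh
  have hexp : ∀ (j n l : ℕ), ℓ (X ^ j * P n * P l) = wc b j n l * h l := by
    intro j
    induction j with
    | zero =>
      intro n l
      simp only [pow_zero, one_mul, wc]
      by_cases hnl : n = l
      · subst hnl; simp [hh]
      · rw [lorth n l hnl, if_neg (by exact_mod_cast hnl), zero_mul]
    | succ j ih =>
      intro n l
      rw [wc]
      cases n with
      | zero =>
        have e : X ^ (j + 1) * P 0 * P l = X ^ j * P 1 * P l := by rw [hP0, hP1]; ring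
        rw [e, ih]
        push_cast
        rw [hb0]; ring_nf
      | succ n =>
        have e : X ^ (j + 1) * P (n + 1) * P l =
            X ^ j * P (n + 2) * P l + C (β (n + 1)) * (X ^ j * P n * P l) := by
          rw [hrec (n + 1) (by omega), Nat.add_sub_cancel]; ring
        rw [e, ladd, lC, ih, ih, hbn (n + 1) (by omega)]
        push_cast
        rw [show (n : ℤ) + 1 + 1 = n + 2 by ring, show (n : ℤ) + 1 - 1 = n by ring]
        ring
  have hstep : ∀ n, h (n + 1) = b (n + 1 : ℕ) * h n := by
    intro n
    have h1 := hexp 1 n (n + 1)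
    have h2 := hexp 1 (n + 1) n
    have e : X ^ 1 * P n * P (n + 1) = X ^ 1 * P (n + 1) * P n := by ring
    rw [e, h2] at h1
    rw [wc_top b 1 n _ (by push_cast; ring)] at h1
    simp only [wc] at h1
    rw [if_neg (by push_cast; omega), if_pos (by push_cast; omega)] at h1
    linarith
  have hpos : ∀ n, 0 < h n := by
    intro n
    induction n with
    | zero => simp only [hh, hP0, mul_one]; exact fL_one_pos m hm lam t hlam
    | succ n ih => rw [hstep, hbn _ (by omega)]; exact mul_pos (hβpos _ (by omega)) ih
  have hsymm : ∀ j n : ℕ, wc b j (n + 1 : ℕ) n = b (n + 1 : ℕ) * wc b j n (n + 1 : ℕ) := by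
    intro j n
    have h1 := hexp j n (n + 1)
    have h2 := hexp j (n + 1) n
    have e : X ^ j * P n * P (n + 1) = X ^ j * P (n + 1) * P n := by ring
    rw [e, h2, hstep] at h1
    apply mul_right_cancel₀ (hpos n).ne'
    rw [h1]; ring
  have hlow : ∀ n : ℕ, ∀ q : ℝ[X], q.natDegree ≤ n → ℓ (q * P n) = q.coeff n * h n := by
    intro n q hq
    have l0 : ℓ 0 = 0 := by have := lC 0 0; simpa using this
    have lsum : ∀ (s : Finset ℕ) (f : ℕ → ℝ[X]), ℓ (∑ i ∈ s, f i) = ∑ i ∈ s, ℓ (f i) := by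
      intro s f
      induction s using Finset.induction_on with
      | empty => simpa using l0
      | insert a s ha ih => rw [Finset.sum_insert ha, Finset.sum_insert ha, ladd, ih]
    have e : q * P n = ∑ i ∈ Finset.range (n + 1), C (q.coeff i) * (X ^ i * P 0 * P n) := by
      conv_lhs => rw [q.as_sum_range_C_mul_X_pow' (n := n + 1) (by omega)]
      rw [Finset.sum_mul, hP0]
      exact Finset.sum_congr rfl fun i _ => by ring
    rw [e, lsum, Finset.sum_range_succ, Finset.sum_eq_zero, zero_add, lC, hexp,
      wc_top b n _ _ (by push_cast; ring), one_mul]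
    intro i hi
    rw [Finset.mem_range] at hi
    rw [lC, hexp, wc_zero_of_lt b i _ _ (by push_cast; omega)]; simp
  have hder : ∀ n : ℕ, ℓ (X * derivative (P n) * P n) = n * h n := by
    intro n
    rw [hlow n]
    · cases n with
      | zero => simp [hP0]
      | succ n =>
        rw [coeff_X_mul, coeff_derivative]
        have : (P (n + 1)).coeff (n + 1) = 1 := by
          have := (hmonic (n + 1)).coeff_natDegree; rwa [hdeg] at this
        rw [this]; push_cast; ring
    · cases n with
      | zero => simp [hP0]
      | succ n =>
        refine natDegree_mul_le.trans ?_
        have := natDegree_derivative_le (P (n + 1))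
        rw [hdeg] at this
        have := natDegree_X_le (R := ℝ)
        omega
  have hstring : ∀ n : ℕ, 2 * m * (gF m b n + gF m b (n + 1 : ℕ)) =
      2 * n + 2 * lam + 2 + 2 * t * (b n + b (n + 1 : ℕ)) := by
    intro n
    have h1 := fL_ibp m hm lam t hlam (P n * P n)
    have e : C (2 * lam + 2) * (P n * P n) + X * derivative (P n * P n) +
        C (2 * t) * X ^ 2 * (P n * P n) - C (2 * m : ℝ) * X ^ (2 * m) * (P n * P n) =
        C (2 * lam + 2) * (P n * P n) + C 2 * (X * derivative (P n) * P n) +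
        C (2 * t) * (X ^ 2 * P n * P n) + C (-(2 * m) : ℝ) * (X ^ (2 * m) * P n * P n) := by
      rw [derivative_mul]
      simp only [map_neg]
      have : (C 2 : ℝ[X]) = 2 := rfl
      rw [this]; ring
    rw [e] at h1
    change ℓ _ = 0 at h1
    rw [ladd, ladd, ladd, lC, lC, lC, lC, hder, hexp, hexp] at h1
    have hw2 : wc b 2 n n = b n + b (n + 1 : ℕ) := by
      simp only [wc]
      rw [if_neg (by omega), if_pos (by omega), if_pos (by omega), if_neg (by omega)]
      push_cast; ring
    have hw : wc b (2 * m) n n = gF m b n + gF m b (n + 1 : ℕ) := by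
      obtain ⟨r, hr⟩ : ∃ r, 2 * m = r + 1 := ⟨2 * m - 1, by omega⟩
      have := hsymm r n
      simp only [gF]
      rw [hr, Nat.add_sub_cancel, wc]
      push_cast at this ⊢
      rw [this, show (n : ℤ) + 1 - 1 = n by ring]; ring
    rw [hw2, hw] at h1
    change (2 * lam + 2) * h n + _ + _ + _ = 0 at h1
    apply mul_right_cancel₀ (hpos n).ne'
    linarith
  have hE : ∀ n : ℕ, 2 * m * gF m b n - 2 * t * b n - n = 0 ∨
      2 * m * gF m b n - 2 * t * b n - n = 2 * lam + 1 := by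
    intro n
    induction n with
    | zero => left; simp [gF, hb0]
    | succ n ih =>
      have := hstring n
      push_cast at this ⊢
      rcases ih with ih | ih
      · right; linarith
      · left; linarith
  set A : ℝ := (Nat.factorial (m - 1) : ℝ) / (ascPochhammer ℝ m).eval ((1 : ℝ) / 2) with hA
  have hpoch : 0 < (ascPochhammer ℝ m).eval ((1 : ℝ) / 2) := ascPochhammer_pos m _ (by norm_num)
  have hA0 : 0 < A := by positivity
  have hfin := freud_abstract m hm b hbnn t |2 * lam + 1| ((1 / 4) * A ^ ((1 : ℝ) / (m : ℝ))) (by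
    intro n
    rcases hE n with h | h <;> rw [h] <;> simp) (by positivity) (by
    rw [mul_pow, ← rpow_natCast (A ^ _), ← rpow_mul hA0.le, one_div_mul_cancel (by positivity),
      rpow_one, hA]
    have := poch_eq m (by omega)
    rw [one_div, inv_pow, mul_comm ((4 ^ m)⁻¹), ← mul_assoc, mul_div_assoc', this]
    field_simp)
  refine hfin.congr' ?_
  filter_upwards [eventually_ge_atTop 1] with n hn
  rw [hbn n hn]
end
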